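/- arXiv:2305.00153 — 5 statements merged into one kernel-verified Lean document; each statement's English description precedes it below -/
import Mathlib

section
/- Let z ∈ ℂ^{n+1} be such that z and z̄ are linearly independent over ℂ and f(z) ≤ 0 (equivalently, the restriction of the Hermitian form to span_ℂ{z,z̄} is elliptic or parabolic, i.e. positive semidefinite). Then ⟨z,z⟩ > 0, i.e. z is a positive vector. -/
open scoped ComplexConjugate

noncomputable def herm (n : ℕ) (z w : Fin (n + 1) → ℂ) : ℂ :=
  (∑ j : Fin n, z j.castSucc * conj (w j.castSucc)) - z (Fin.last n) * conj (w (Fin.last n))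

def conjVec (n : ℕ) (z : Fin (n + 1) → ℂ) : Fin (n + 1) → ℂ := fun j => conj (z j)

noncomputable def fdet (n : ℕ) (z : Fin (n + 1) → ℂ) : ℝ :=
  Complex.normSq (herm n z (conjVec n z)) - ((herm n z z).re) ^ 2

def IsRealVec (n : ℕ) (z : Fin (n + 1) → ℂ) : Prop := conjVec n z = z

def Scone (n : ℕ) : Set (Fin (n + 1) → ℂ) :=
  {w | w ≠ 0 ∧ IsRealVec n w ∧ herm n w w = 0}

def LambdaCone (n : ℕ) : Set (Fin (n + 1) → ℂ) :=
  {z | z ≠ 0 ∧ ∃ w ∈ Scone n, herm n z w = 0}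

/-!
The plane `span {z, z̄}` contains a nonzero vector of the hyperplane `z_{n+1} = 0`, on which the
Hermitian form is positive definite, so the form takes a positive value on this plane. Its Gram
matrix there has both diagonal entries equal to `⟨z, z⟩` and determinant `-f(z) ≥ 0`, so if
`⟨z, z⟩ ≤ 0` held, the form would be negative semidefinite on the plane.
-/

theorem exists_smul_add_smul_ne_zero_and_apply_eq_zero {R M : Type*} [CommRing R] [Nontrivial R]
    [AddCommGroup M] [Module R M] (l : M →ₗ[R] R) {u v : M}
    (huv : LinearIndependent R ![u, v]) :
    ∃ a b : R, a • u + b • v ≠ 0 ∧ l (a • u + b • v) = 0 := by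
  by_cases hu : l u = 0
  · exact ⟨1, 0, by simpa using huv.ne_zero 0, by simp [hu]⟩
  · refine ⟨l v, -l u, fun h ↦ hu ?_, by simp [mul_comm]⟩
    exact neg_eq_zero.mp (LinearIndependent.pair_iff.mp huv _ _ h).2

theorem sq_mul_add_two_mul_add_sq_mul_nonpos {R : Type*} [CommRing R] [LinearOrder R]
    [IsStrictOrderedRing R] {p q g : R} (hdet : g ^ 2 ≤ p * q) (htrace : p + q ≤ 0) (s t : R) :
    s ^ 2 * p + 2 * (s * t * g) + t ^ 2 * q ≤ 0 := by
  have hp : p ≤ 0 := by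
    by_contra! hp
    nlinarith [sq_nonneg g]
  have hq : q ≤ 0 := by
    by_contra! hq
    nlinarith [sq_nonneg g]
  have hdiag : 0 ≤ -(s ^ 2 * p + t ^ 2 * q) := by
    nlinarith [mul_nonneg (sq_nonneg s) (neg_nonneg.mpr hp),
      mul_nonneg (sq_nonneg t) (neg_nonneg.mpr hq)]
  have hsq : (2 * (s * t * g)) ^ 2 ≤ (-(s ^ 2 * p + t ^ 2 * q)) ^ 2 :=
    calc (2 * (s * t * g)) ^ 2 = 4 * (s * t) ^ 2 * g ^ 2 := by ring
      _ ≤ 4 * (s * t) ^ 2 * (p * q) := by gcongr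
      _ = 4 * (s ^ 2 * p) * (t ^ 2 * q) := by ring
      _ ≤ (s ^ 2 * p + t ^ 2 * q) ^ 2 := four_mul_le_sq_add _ _
      _ = (-(s ^ 2 * p + t ^ 2 * q)) ^ 2 := (neg_sq _).symm
  linarith [(abs_le_of_sq_le_sq' hsq hdiag).2]

section HermitianForm

variable {𝕜 V : Type*} [RCLike 𝕜] [AddCommGroup V] [Module 𝕜 V] {B : V →ₗ⋆[𝕜] V →ₗ[𝕜] 𝕜}

theorem re_apply_smul_add_smul_self_le (hB : B.IsSymm) (u v : V) (a b : 𝕜) :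
    RCLike.re (B (a • u + b • v) (a • u + b • v)) ≤
      ‖a‖ ^ 2 * RCLike.re (B u u) + 2 * (‖a‖ * ‖b‖ * ‖B u v‖) + ‖b‖ ^ 2 * RCLike.re (B v v) := by
  have hdiag (c : 𝕜) (w : V) :
      RCLike.re (c * (conj c * B w w)) = ‖c‖ ^ 2 * RCLike.re (B w w) := by
    rw [← mul_assoc, RCLike.mul_conj, ← RCLike.ofReal_pow, RCLike.re_ofReal_mul]
  have hcross : RCLike.re (a * (conj b * B v u)) = RCLike.re (b * (conj a * B u v)) := by
    rw [← RCLike.conj_re, ← hB.eq u v]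
    simp only [map_mul, RCLike.conj_conj]
    congr 1
    ring
  have hle : RCLike.re (b * (conj a * B u v)) ≤ ‖a‖ * ‖b‖ * ‖B u v‖ := by
    simpa [mul_assoc, mul_left_comm] using RCLike.re_le_norm (b * (conj a * B u v))
  simp only [map_add, LinearMap.add_apply, map_smulₛₗ, LinearMap.smul_apply, smul_eq_mul,
    RingHom.id_apply, mul_add, hdiag, hcross]
  linarith

theorem pos_of_fdet_nonpos_general (hB : B.IsSymm) (l : V →ₗ[𝕜] 𝕜)
    (hpos : ∀ w, w ≠ 0 → l w = 0 → 0 < RCLike.re (B w w)) {u v : V}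
    (huv : LinearIndependent 𝕜 ![u, v])
    (hdet : ‖B u v‖ ^ 2 ≤ RCLike.re (B u u) * RCLike.re (B v v)) :
    0 < RCLike.re (B u u) + RCLike.re (B v v) := by
  obtain ⟨a, b, hne, hker⟩ := exists_smul_add_smul_ne_zero_and_apply_eq_zero l huv
  by_contra! htrace
  refine (hpos _ hne hker).not_ge ?_
  exact (re_apply_smul_add_smul_self_le hB u v a b).trans
    (sq_mul_add_two_mul_add_sq_mul_nonpos hdet htrace ‖a‖ ‖b‖)

end HermitianForm

/-- The Hermitian form `herm n` as a sesquilinear map. Mathlib's sesquilinear forms are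
conjugate-linear in the first argument, so the arguments of `herm` are swapped. -/
noncomputable def hermForm (n : ℕ) : (Fin (n + 1) → ℂ) →ₗ⋆[ℂ] (Fin (n + 1) → ℂ) →ₗ[ℂ] ℂ :=
  LinearMap.mk₂'ₛₗ (starRingEnd ℂ) (RingHom.id ℂ) (fun w z ↦ herm n z w)
    (fun _ _ _ ↦ by simp only [herm, Pi.add_apply, map_add, mul_add, Finset.sum_add_distrib]; ring)
    (fun _ _ _ ↦ by
      simp only [herm, Pi.smul_apply, smul_eq_mul, map_mul, mul_sub, Finset.mul_sum,
        mul_left_comm])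
    (fun _ _ _ ↦ by simp only [herm, Pi.add_apply, add_mul, Finset.sum_add_distrib]; ring)
    (fun _ _ _ ↦ by
      simp only [herm, Pi.smul_apply, smul_eq_mul, RingHom.id_apply, mul_sub, Finset.mul_sum,
        mul_assoc])

theorem hermForm_apply (n : ℕ) (w z : Fin (n + 1) → ℂ) : hermForm n w z = herm n z w := rfl

theorem hermForm_isSymm (n : ℕ) : (hermForm n).IsSymm where
  eq w z := by simp [hermForm_apply, herm, mul_comm]

theorem hermForm_self_re_pos {n : ℕ} {w : Fin (n + 1) → ℂ} (hw : w ≠ 0)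
    (hlast : w (Fin.last n) = 0) : 0 < (hermForm n w w).re := by
  have hsum : (hermForm n w w).re = ∑ j : Fin n, Complex.normSq (w j.castSucc) := by
    simp [hermForm_apply, herm, hlast, Complex.normSq_apply]
  obtain ⟨j, hj⟩ : ∃ j : Fin n, w j.castSucc ≠ 0 := by
    by_contra! h
    exact hw (funext (Fin.lastCases hlast h))
  rw [hsum]
  exact Finset.sum_pos' (fun i _ ↦ Complex.normSq_nonneg _)
    ⟨j, Finset.mem_univ j, Complex.normSq_pos.mpr hj⟩

theorem herm_conjVec_conjVec (n : ℕ) (z w : Fin (n + 1) → ℂ) :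
    herm n (conjVec n z) (conjVec n w) = conj (herm n z w) := by
  simp [herm, conjVec]

theorem fdet_eq_norm_sq_sub (n : ℕ) (z : Fin (n + 1) → ℂ) :
    fdet n z = ‖hermForm n z (conjVec n z)‖ ^ 2 -
      (hermForm n z z).re * (hermForm n (conjVec n z) (conjVec n z)).re := by
  have hnorm : ‖hermForm n z (conjVec n z)‖ = ‖herm n z (conjVec n z)‖ := by
    rw [← (hermForm_isSymm n).eq, RCLike.norm_conj, hermForm_apply]
  rw [fdet, hnorm, Complex.normSq_eq_norm_sq, hermForm_apply, hermForm_apply,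
    herm_conjVec_conjVec, Complex.conj_re, sq (herm n z z).re]

/-- (Corollary 3.7): If `z` and `z̄` are linearly independent and `f(z) ≤ 0` (the plane
`span {z, z̄}` is elliptic or parabolic), then `z` is a positive vector. -/
theorem pos_of_fdet_nonpos (n : ℕ) (hn : 2 ≤ n) (z : Fin (n + 1) → ℂ)
    (hind : LinearIndependent ℂ ![z, conjVec n z]) (hf : fdet n z ≤ 0) :
    0 < (herm n z z).re := by
  have htrace := pos_of_fdet_nonpos_general (hermForm_isSymm n) (LinearMap.proj (Fin.last n))
    (fun _ ↦ hermForm_self_re_pos) hind (sub_nonpos.mp (fdet_eq_norm_sq_sub n z ▸ hf))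
  simpa [hermForm_apply, herm_conjVec_conjVec] using htrace
end

section
/- Let n > 2 and let z ∈ ℂ^{n+1} be such that z and z̄ are linearly independent over ℂ. Then z ∈ Λ̃ (i.e. there exists a real null vector w ∈ S with ⟨z,w⟩ = 0) if and only if f(z) ≤ 0. -/
open scoped ComplexConjugate

/-!
On real vectors the Hermitian form is a Lorentzian inner product, and up to a factor `-4`, `f z` is
its Gram determinant on `u = Re z` and `v = Im z`. The question is thus whether some nonzero null
vector is Lorentz orthogonal to both `u = (x, a)` and `v = (y, c)`. Rescaling its last coordinate to
`1`, such a vector is a point `e` of the unit sphere with `⟪x, e⟫ = a` and `⟪y, e⟫ = c`. If it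
exists, the Lorentzian Gram determinant is the Euclidean one of `x - a • e` and `y - c • e`, so it
is nonnegative by Cauchy–Schwarz. Conversely, if the determinant is nonnegative, then the point of
the plane spanned by `x` and `y` having the prescribed inner products lies in the unit ball, and a
third dimension leaves room to move it to the sphere orthogonally to that plane.
-/

open scoped InnerProductSpace

lemma span_ne_top_of_mk_lt_rank {R M : Type*} [Semiring R] [StrongRankCondition R]
    [AddCommMonoid M] [Module R M] {s : Set M} (h : Cardinal.mk s < Module.rank R M) :
    Submodule.span R s ≠ ⊤ := by
  intro hs
  have hle := rank_span_le (R := R) s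
  rw [hs, rank_top] at hle
  exact hle.not_gt h

section PrescribedInnerProducts

open Module Submodule

variable {𝕜 E : Type*} [RCLike 𝕜] [NormedAddCommGroup E] [InnerProductSpace 𝕜 E]

lemma exists_mem_span_inner_eq {ι : Type*} [Finite ι] {v : ι → E} (hv : LinearIndependent 𝕜 v)
    (a : ι → 𝕜) : ∃ p ∈ span 𝕜 (Set.range v), ∀ i, ⟪p, v i⟫_𝕜 = a i := by
  let b := Basis.span hv
  have : FiniteDimensional 𝕜 (span 𝕜 (Set.range v)) := b.finiteDimensional_of_finite
  let p := (InnerProductSpace.toDual 𝕜 _).symm (b.constr 𝕜 a).toContinuousLinearMap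
  refine ⟨p, p.2, fun i ↦ ?_⟩
  calc ⟪(p : E), v i⟫_𝕜 = ⟪p, b i⟫_𝕜 := by rw [coe_inner, Basis.span_apply]
    _ = b.constr 𝕜 a (b i) := InnerProductSpace.toDual_symm_apply
    _ = a i := b.constr_basis 𝕜 a i

lemma exists_norm_eq_forall_mem_inner_eq {K : Submodule 𝕜 E} [K.HasOrthogonalProjection]
    (hK : K ≠ ⊤) {p : E} (hp : p ∈ K) {r : ℝ} (hr : ‖p‖ ≤ r) :
    ∃ e : E, ‖e‖ = r ∧ ∀ x ∈ K, ⟪x, e⟫_𝕜 = ⟪x, p⟫_𝕜 := by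
  have : Nontrivial Kᗮ := nontrivial_iff_ne_bot.2 (mt orthogonal_eq_bot_iff.1 hK)
  let : NormedSpace ℝ Kᗮ := NormedSpace.restrictScalars ℝ 𝕜 Kᗮ
  obtain ⟨q, hq⟩ := exists_norm_eq Kᗮ (Real.sqrt_nonneg (r ^ 2 - ‖p‖ ^ 2))
  have hpq : ⟪p, (q : E)⟫_𝕜 = 0 := inner_right_of_mem_orthogonal hp q.2
  have hr₀ : 0 ≤ r := (norm_nonneg p).trans hr
  refine ⟨p + q, ?_, fun x hx ↦ ?_⟩
  · have hsq : 0 ≤ r ^ 2 - ‖p‖ ^ 2 := sub_nonneg.2 (pow_le_pow_left₀ (norm_nonneg p) hr 2)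
    rw [← mul_self_inj (norm_nonneg _) hr₀,
      norm_add_sq_eq_norm_sq_add_norm_sq_of_inner_eq_zero _ _ hpq, norm_coe, hq,
      Real.mul_self_sqrt hsq]
    ring
  · rw [inner_add_right, inner_right_of_mem_orthogonal hx q.2, add_zero]

end PrescribedInnerProducts

section Lorentz

open Submodule

variable {E : Type*} [NormedAddCommGroup E] [InnerProductSpace ℝ E]

lemma gram_det_pos_of_linearIndependent {x y : E} (h : LinearIndependent ℝ ![x, y]) :
    0 < ‖x‖ ^ 2 * ‖y‖ ^ 2 - ⟪x, y⟫_ℝ ^ 2 := by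
  have := (Matrix.posDef_gram_of_linearIndependent (𝕜 := ℝ) h).det_pos
  simpa [Matrix.det_fin_two, Matrix.gram_apply, real_inner_comm x y, sq] using this

lemma gram_det_mul_norm_sq_of_mem_span {x y p : E} (hp : p ∈ span ℝ (Set.range ![x, y])) :
    (‖x‖ ^ 2 * ‖y‖ ^ 2 - ⟪x, y⟫_ℝ ^ 2) * ‖p‖ ^ 2 = ‖⟪x, p⟫_ℝ • y - ⟪y, p⟫_ℝ • x‖ ^ 2 := by
  obtain ⟨s, rfl⟩ := (mem_span_range_iff_exists_fun ℝ).1 hp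
  simp only [Fin.sum_univ_two, Matrix.cons_val_zero, Matrix.cons_val_one,
    ← real_inner_self_eq_norm_sq, inner_add_left, inner_add_right, inner_sub_left, inner_sub_right,
    real_inner_smul_left, real_inner_smul_right, real_inner_comm x y]
  ring

/-- The Lorentzian inner product on `E × ℝ`, where the second factor is the time axis. -/
def lorentzInner (u v : E × ℝ) : ℝ := ⟪u.1, v.1⟫_ℝ - u.2 * v.2

lemma lorentzInner_smul_right (u v : E × ℝ) (t : ℝ) :
    lorentzInner u (t • v) = t * lorentzInner u v := by
  simp only [lorentzInner, Prod.smul_fst, Prod.smul_snd, real_inner_smul_right, smul_eq_mul]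
  ring

lemma exists_eq_smul_of_lorentzInner_self_eq_zero {w : E × ℝ} (hw : w ≠ 0)
    (hww : lorentzInner w w = 0) : ∃ (t : ℝ) (e : E), t ≠ 0 ∧ ‖e‖ = 1 ∧ w = t • (e, 1) := by
  obtain ⟨x, t⟩ := w
  have hxt : ‖x‖ ^ 2 = t ^ 2 := by
    rw [← real_inner_self_eq_norm_sq, sq t]; exact sub_eq_zero.1 hww
  have ht : t ≠ 0 := by
    rintro rfl
    exact hw (by simpa using hxt)
  refine ⟨t, t⁻¹ • x, ht, ?_, by simp [ht]⟩
  rw [norm_smul, norm_inv, Real.norm_eq_abs, ← abs_norm x, (sq_eq_sq_iff_abs_eq_abs _ _).1 hxt,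
    inv_mul_cancel₀ (abs_ne_zero.2 ht)]

lemma exists_null_lorentzInner_eq_zero_iff_exists_unit (u v : E × ℝ) :
    (∃ w ≠ 0, lorentzInner w w = 0 ∧ lorentzInner u w = 0 ∧ lorentzInner v w = 0) ↔
      ∃ e : E, ‖e‖ = 1 ∧ ⟪u.1, e⟫_ℝ = u.2 ∧ ⟪v.1, e⟫_ℝ = v.2 := by
  constructor
  · rintro ⟨w, hw, hww, huw, hvw⟩
    obtain ⟨t, e, ht, he, rfl⟩ := exists_eq_smul_of_lorentzInner_self_eq_zero hw hww
    simp only [lorentzInner_smul_right, mul_eq_zero, ht, false_or] at huw hvw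
    simp only [lorentzInner, mul_one, sub_eq_zero] at huw hvw
    exact ⟨e, he, huw, hvw⟩
  · rintro ⟨e, he, hu, hv⟩
    exact ⟨(e, 1), by simp, by simp [lorentzInner, he], by simp [lorentzInner, hu],
      by simp [lorentzInner, hv]⟩

lemma lorentzInner_eq_inner_sub_smul {u v : E × ℝ} {e : E} (he : ‖e‖ = 1)
    (hu : ⟪u.1, e⟫_ℝ = u.2) (hv : ⟪v.1, e⟫_ℝ = v.2) :
    lorentzInner u v = ⟪u.1 - u.2 • e, v.1 - v.2 • e⟫_ℝ := by
  simp only [lorentzInner, inner_sub_left, inner_sub_right, real_inner_smul_left,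
    real_inner_smul_right, real_inner_comm v.1 e, real_inner_self_eq_norm_sq, he, hu, hv]
  ring

lemma lorentzInner_sq_le_of_inner_eq {u v : E × ℝ} {e : E} (he : ‖e‖ = 1)
    (hu : ⟪u.1, e⟫_ℝ = u.2) (hv : ⟪v.1, e⟫_ℝ = v.2) :
    lorentzInner u v ^ 2 ≤ lorentzInner u u * lorentzInner v v := by
  rw [lorentzInner_eq_inner_sub_smul he hu hv, lorentzInner_eq_inner_sub_smul he hu hu,
    lorentzInner_eq_inner_sub_smul he hv hv, sq]
  exact real_inner_mul_inner_self_le _ _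

lemma lorentzInner_gram_det_eq (u v : E × ℝ) :
    lorentzInner u u * lorentzInner v v - lorentzInner u v ^ 2 =
      (‖u.1‖ ^ 2 * ‖v.1‖ ^ 2 - ⟪u.1, v.1⟫_ℝ ^ 2) - ‖u.2 • v.1 - v.2 • u.1‖ ^ 2 := by
  simp only [lorentzInner, ← real_inner_self_eq_norm_sq, inner_sub_left, inner_sub_right,
    real_inner_smul_left, real_inner_smul_right, real_inner_comm u.1 v.1]
  ring

lemma lorentzInner_sq_le_iff (u v : E × ℝ) :
    lorentzInner u v ^ 2 ≤ lorentzInner u u * lorentzInner v v ↔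
      ‖u.2 • v.1 - v.2 • u.1‖ ^ 2 ≤ ‖u.1‖ ^ 2 * ‖v.1‖ ^ 2 - ⟪u.1, v.1⟫_ℝ ^ 2 := by
  rw [← sub_nonneg, lorentzInner_gram_det_eq, sub_nonneg]

lemma linearIndependent_fst_of_lorentzInner_sq_le {u v : E × ℝ} (huv : LinearIndependent ℝ ![u, v])
    (h : lorentzInner u v ^ 2 ≤ lorentzInner u u * lorentzInner v v) :
    LinearIndependent ℝ ![u.1, v.1] := by
  rw [lorentzInner_sq_le_iff] at h
  by_contra hdep
  have hdet : ‖u.1‖ ^ 2 * ‖v.1‖ ^ 2 - ⟪u.1, v.1⟫_ℝ ^ 2 = 0 := by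
    have := mt Matrix.det_gram_ne_zero_iff_linearIndependent.1 hdep
    simpa [Matrix.det_fin_two, Matrix.gram_apply, real_inner_comm u.1 v.1, sq] using this
  have hfst : u.2 • v.1 - v.2 • u.1 = 0 := by
    rw [hdet] at h
    simpa using h
  have hrel : -v.2 • u + u.2 • v = 0 := by
    ext
    · simpa [sub_eq_neg_add] using hfst
    · simp [mul_comm]
  obtain ⟨hv₂, hu₂⟩ := LinearIndependent.pair_iff.1 huv _ _ hrel
  have hinl : LinearMap.inl ℝ E ℝ ∘ ![u.1, v.1] = ![u, v] := by
    funext i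
    fin_cases i
    · simp [← hu₂]
    · simp [← neg_eq_zero.1 hv₂]
  exact hdep (LinearIndependent.of_comp (LinearMap.inl ℝ E ℝ) (hinl ▸ huv))

theorem exists_null_lorentzInner_eq_zero_iff (hE : 2 < Module.rank ℝ E) {u v : E × ℝ}
    (huv : LinearIndependent ℝ ![u, v]) :
    (∃ w ≠ 0, lorentzInner w w = 0 ∧ lorentzInner u w = 0 ∧ lorentzInner v w = 0) ↔
      lorentzInner u v ^ 2 ≤ lorentzInner u u * lorentzInner v v := by
  rw [exists_null_lorentzInner_eq_zero_iff_exists_unit]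
  refine ⟨fun ⟨e, he, hu, hv⟩ ↦ lorentzInner_sq_le_of_inner_eq he hu hv, fun h ↦ ?_⟩
  have hxy := linearIndependent_fst_of_lorentzInner_sq_le huv h
  obtain ⟨p, hp, hpi⟩ := exists_mem_span_inner_eq hxy ![u.2, v.2]
  have hup : ⟪u.1, p⟫_ℝ = u.2 := by rw [real_inner_comm]; exact hpi 0
  have hvp : ⟪v.1, p⟫_ℝ = v.2 := by rw [real_inner_comm]; exact hpi 1
  have hp_le : ‖p‖ ≤ 1 := by
    have hdet := gram_det_mul_norm_sq_of_mem_span hp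
    rw [hup, hvp] at hdet
    rw [lorentzInner_sq_le_iff, ← hdet] at h
    rw [← sq_le_one_iff₀ (norm_nonneg p)]
    exact (mul_le_iff_le_one_right (gram_det_pos_of_linearIndependent hxy)).1 h
  have hK : span ℝ (Set.range ![u.1, v.1]) ≠ ⊤ := by
    refine span_ne_top_of_mk_lt_rank (lt_of_le_of_lt ?_ hE)
    simpa using Cardinal.mk_range_le_lift (f := ![u.1, v.1])
  have := FiniteDimensional.span_of_finite ℝ (Set.finite_range ![u.1, v.1])
  obtain ⟨e, he, hpe⟩ := exists_norm_eq_forall_mem_inner_eq hK hp hp_le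
  exact ⟨e, he, (hpe _ (subset_span ⟨0, rfl⟩)).trans hup, (hpe _ (subset_span ⟨1, rfl⟩)).trans hvp⟩

end Lorentz

lemma linearIndependent_re_im_of_linearIndependent_star {ι : Type*} {z : ι → ℂ}
    (h : LinearIndependent ℂ ![z, star z]) :
    LinearIndependent ℝ ![fun j ↦ (z j).re, fun j ↦ (z j).im] := by
  rw [LinearIndependent.pair_iff] at h ⊢
  intro s t hst
  -- `s * Re z + t * Im z` is `(⟨s, -t⟩ * z + ⟨s, t⟩ * conj z) / 2`.
  have hcomb : (⟨s, -t⟩ : ℂ) • z + (⟨s, t⟩ : ℂ) • star z = 0 := by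
    funext j
    have hj : s * (z j).re + t * (z j).im = 0 := congrFun hst j
    apply Complex.ext
    · simp only [Pi.add_apply, Pi.smul_apply, smul_eq_mul, Pi.star_apply, RCLike.star_def,
        Complex.add_re, Complex.mul_re, Complex.conj_re, Complex.conj_im, Pi.zero_apply,
        Complex.zero_re]
      linear_combination 2 * hj
    · simp only [Pi.add_apply, Pi.smul_apply, smul_eq_mul, Pi.star_apply, RCLike.star_def,
        Complex.add_im, Complex.mul_im, Complex.conj_re, Complex.conj_im, Pi.zero_apply,
        Complex.zero_im]
      ring
  exact ⟨congrArg Complex.re (h _ _ hcomb).2, congrArg Complex.im (h _ _ hcomb).2⟩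

section Coordinates

variable {n : ℕ}

/-- The identification of `ℝⁿ⁺¹` with `ℝⁿ × ℝ` that separates off the last coordinate, which is the
time axis of `herm n`. -/
noncomputable def splitLast (n : ℕ) : (Fin (n + 1) → ℝ) ≃ₗ[ℝ] EuclideanSpace ℝ (Fin n) × ℝ where
  toFun r := (WithLp.toLp 2 (Fin.init r), r (Fin.last n))
  map_add' _ _ := rfl
  map_smul' _ _ := rfl
  invFun p := Fin.snoc (α := fun _ ↦ ℝ) p.1.ofLp p.2
  left_inv r := Fin.snoc_init_self r
  right_inv p := by simp

lemma splitLast_fst (r : Fin (n + 1) → ℝ) : (splitLast n r).1 = WithLp.toLp 2 (Fin.init r) := rfl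

lemma splitLast_snd (r : Fin (n + 1) → ℝ) : (splitLast n r).2 = r (Fin.last n) := rfl

/-- The real part of `z`, as a vector of `ℝⁿ × ℝ`. -/
noncomputable def reSplit (z : Fin (n + 1) → ℂ) : EuclideanSpace ℝ (Fin n) × ℝ :=
  splitLast n fun j ↦ (z j).re

/-- The imaginary part of `z`, as a vector of `ℝⁿ × ℝ`. -/
noncomputable def imSplit (z : Fin (n + 1) → ℂ) : EuclideanSpace ℝ (Fin n) × ℝ :=
  splitLast n fun j ↦ (z j).im

lemma linearIndependent_reSplit_imSplit {z : Fin (n + 1) → ℂ}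
    (h : LinearIndependent ℂ ![z, conjVec n z]) :
    LinearIndependent ℝ ![reSplit z, imSplit z] := by
  have hmap : splitLast n ∘ ![fun j ↦ (z j).re, fun j ↦ (z j).im] = ![reSplit z, imSplit z] := by
    funext i
    fin_cases i <;> rfl
  rw [← hmap]
  exact (linearIndependent_re_im_of_linearIndependent_star h).map' _ (splitLast n).ker

lemma lorentzInner_splitLast (r s : Fin (n + 1) → ℝ) :
    lorentzInner (splitLast n r) (splitLast n s) =
      ∑ j : Fin n, r j.castSucc * s j.castSucc - r (Fin.last n) * s (Fin.last n) := by
  rw [lorentzInner, splitLast_fst, splitLast_fst, EuclideanSpace.inner_toLp_toLp]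
  simp [dotProduct, Fin.init, splitLast_snd, mul_comm]

lemma herm_re (z w : Fin (n + 1) → ℂ) :
    (herm n z w).re =
      lorentzInner (reSplit z) (reSplit w) + lorentzInner (imSplit z) (imSplit w) := by
  simp only [herm, reSplit, imSplit, lorentzInner_splitLast, Complex.sub_re, Complex.re_sum,
    Complex.mul_re, Complex.conj_re, Complex.conj_im, mul_neg, sub_neg_eq_add,
    Finset.sum_add_distrib]
  ring

lemma herm_im (z w : Fin (n + 1) → ℂ) :
    (herm n z w).im =
      lorentzInner (imSplit z) (reSplit w) - lorentzInner (reSplit z) (imSplit w) := by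
  simp only [herm, reSplit, imSplit, lorentzInner_splitLast, Complex.sub_im, Complex.im_sum,
    Complex.mul_im, Complex.conj_re, Complex.conj_im, mul_neg, Finset.sum_add_distrib,
    Finset.sum_neg_distrib]
  ring

lemma reSplit_conjVec (z : Fin (n + 1) → ℂ) : reSplit (conjVec n z) = reSplit z := rfl

lemma imSplit_conjVec (z : Fin (n + 1) → ℂ) : imSplit (conjVec n z) = -imSplit z :=
  map_neg (splitLast n) fun j ↦ (z j).im

lemma fdet_eq_lorentzInner (z : Fin (n + 1) → ℂ) :
    fdet n z = 4 * (lorentzInner (reSplit z) (imSplit z) ^ 2 -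
      lorentzInner (reSplit z) (reSplit z) * lorentzInner (imSplit z) (imSplit z)) := by
  rw [fdet, Complex.normSq_apply, herm_re, herm_im, herm_re, reSplit_conjVec, imSplit_conjVec]
  simp only [lorentzInner, Prod.fst_neg, Prod.snd_neg, inner_neg_right,
    real_inner_comm (reSplit z).1 (imSplit z).1]
  ring

lemma isRealVec_iff_imSplit_eq_zero {w : Fin (n + 1) → ℂ} : IsRealVec n w ↔ imSplit w = 0 := by
  simp [IsRealVec, conjVec, imSplit, funext_iff, Complex.conj_eq_iff_im]

lemma exists_isRealVec_reSplit_eq (p : EuclideanSpace ℝ (Fin n) × ℝ) :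
    ∃ w, IsRealVec n w ∧ reSplit w = p :=
  ⟨fun j ↦ ((splitLast n).symm p j : ℂ), funext fun _ ↦ Complex.conj_ofReal _,
    (splitLast n).apply_symm_apply p⟩

lemma reSplit_eq_zero_iff_of_isRealVec {w : Fin (n + 1) → ℂ} (hw : IsRealVec n w) :
    reSplit w = 0 ↔ w = 0 := by
  have him : ∀ j, (w j).im = 0 := fun j ↦ Complex.conj_eq_iff_im.1 (congrFun hw j)
  simp [reSplit, funext_iff, Complex.ext_iff, him]

lemma herm_eq_zero_iff_of_isRealVec (z : Fin (n + 1) → ℂ) {w : Fin (n + 1) → ℂ}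
    (hw : IsRealVec n w) :
    herm n z w = 0 ↔
      lorentzInner (reSplit z) (reSplit w) = 0 ∧ lorentzInner (imSplit z) (reSplit w) = 0 := by
  rw [Complex.ext_iff, herm_re, herm_im, isRealVec_iff_imSplit_eq_zero.1 hw]
  simp [lorentzInner]

lemma herm_self_eq_zero_iff_of_isRealVec {w : Fin (n + 1) → ℂ} (hw : IsRealVec n w) :
    herm n w w = 0 ↔ lorentzInner (reSplit w) (reSplit w) = 0 := by
  rw [herm_eq_zero_iff_of_isRealVec w hw, isRealVec_iff_imSplit_eq_zero.1 hw]
  simp [lorentzInner]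

lemma mem_lambdaCone_iff_exists_null (z : Fin (n + 1) → ℂ) :
    z ∈ LambdaCone n ↔ z ≠ 0 ∧ ∃ p ≠ 0, lorentzInner p p = 0 ∧
      lorentzInner (reSplit z) p = 0 ∧ lorentzInner (imSplit z) p = 0 := by
  refine and_congr_right fun _ ↦ ⟨?_, ?_⟩
  · rintro ⟨w, ⟨hw₀, hw, hww⟩, hzw⟩
    exact ⟨reSplit w, (reSplit_eq_zero_iff_of_isRealVec hw).not.2 hw₀,
      (herm_self_eq_zero_iff_of_isRealVec hw).1 hww, (herm_eq_zero_iff_of_isRealVec z hw).1 hzw⟩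
  · rintro ⟨p, hp₀, hpp, hzp⟩
    obtain ⟨w, hw, rfl⟩ := exists_isRealVec_reSplit_eq p
    exact ⟨w, ⟨(reSplit_eq_zero_iff_of_isRealVec hw).not.1 hp₀, hw,
      (herm_self_eq_zero_iff_of_isRealVec hw).2 hpp⟩, (herm_eq_zero_iff_of_isRealVec z hw).2 hzp⟩

lemma fdet_nonpos_iff_lorentzInner_sq_le (z : Fin (n + 1) → ℂ) :
    fdet n z ≤ 0 ↔ lorentzInner (reSplit z) (imSplit z) ^ 2 ≤
      lorentzInner (reSplit z) (reSplit z) * lorentzInner (imSplit z) (imSplit z) := by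
  rw [fdet_eq_lorentzInner, mul_nonpos_iff_pos_imp_nonpos]
  simp

end Coordinates

/-- (Lemma 3.8 / `le:5`): For `n > 2` and `z` with `z, z̄` linearly independent,
`z` lies in the cone over `Λ` iff `f(z) ≤ 0`. -/
theorem mem_lambdaCone_iff_fdet_nonpos (n : ℕ) (hn : 2 < n) (z : Fin (n + 1) → ℂ)
    (hind : LinearIndependent ℂ ![z, conjVec n z]) :
    z ∈ LambdaCone n ↔ fdet n z ≤ 0 := by
  have hz : z ≠ 0 := hind.ne_zero 0
  have hrank : 2 < Module.rank ℝ (EuclideanSpace ℝ (Fin n)) :=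
    Module.lt_rank_of_lt_finrank (by rwa [finrank_euclideanSpace_fin])
  rw [mem_lambdaCone_iff_exists_null, and_iff_right hz, fdet_nonpos_iff_lorentzInner_sq_le]
  exact exists_null_lorentzInner_eq_zero_iff hrank (linearIndependent_reSplit_imSplit hind)
end

section
/- Let z ∈ ℂ^{n+1} \ {0} be such that z and z̄ are linearly dependent over ℂ. Then z ∈ Λ̃ (i.e. there exists a real null vector w ∈ S with ⟨z,w⟩ = 0) if and only if ⟨z,z⟩ ≥ 0. -/
open scoped ComplexConjugate

/-!
Up to a nonzero scalar, `z` is a real vector `(v, t)`, and a real null vector is `(u, 1)` with `u` a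
unit vector. So `z ∈ Λ̃` says that `t` is a value of `⟪v, ·⟫` on the unit sphere of `ℝⁿ`. That
sphere is connected for `n ≥ 2`, so these values fill `[-‖v‖, ‖v‖]`, while `|t| ≤ ‖v‖` says that
`⟨z, z⟩ ≥ 0`.
-/

open Metric
open scoped InnerProductSpace

section InnerProductSpace

variable {E : Type*} [NormedAddCommGroup E] [InnerProductSpace ℝ E]

theorem image_inner_sphere (hE : 1 < Module.rank ℝ E) (x : E) :
    (fun u => ⟪x, u⟫_ℝ) '' sphere 0 1 = Set.Icc (-‖x‖) ‖x‖ := by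
  refine Set.Subset.antisymm ?_ ?_
  · rintro _ ⟨u, hu, rfl⟩
    simpa [mem_sphere_zero_iff_norm.mp hu, abs_le] using abs_real_inner_le_norm x u
  have : Nontrivial E := rank_pos_iff_nontrivial.mp (zero_lt_one.trans hE)
  obtain ⟨e, he, hxe⟩ : ∃ e : E, ‖e‖ = 1 ∧ ⟪x, e⟫_ℝ = ‖x‖ := by
    rcases eq_or_ne x 0 with rfl | hx
    · obtain ⟨e, he⟩ := exists_norm_eq E zero_le_one
      exact ⟨e, he, by simp⟩
    · refine ⟨‖x‖⁻¹ • x, norm_smul_inv_norm (𝕜 := ℝ) hx, ?_⟩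
      rw [real_inner_smul_right, real_inner_self_eq_norm_mul_norm,
        inv_mul_cancel_left₀ (norm_ne_zero_iff.mpr hx)]
  have hIcc := (isPreconnected_sphere hE 0 1).intermediate_value
    (a := -e) (b := e) (by simpa using he) (by simpa using he)
    (f := fun u => ⟪x, u⟫_ℝ) (by fun_prop)
  simpa only [inner_neg_right, hxe] using hIcc

end InnerProductSpace

section StarModule

variable {E : Type*} [AddCommGroup E] [Module ℂ E] [StarAddMonoid E] [StarModule ℂ E]

theorem exists_eq_smul_isSelfAdjoint_of_not_linearIndependent {z : E} (hz : z ≠ 0)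
    (h : ¬ LinearIndependent ℂ ![z, star z]) :
    ∃ c : ℂ, c ≠ 0 ∧ ∃ x : E, IsSelfAdjoint x ∧ z = c • x := by
  simp only [LinearIndependent.pair_iff' hz, not_forall, not_not] at h
  obtain ⟨a, ha⟩ := h
  have ha_unit : conj a * a = 1 := by
    refine smul_left_injective ℂ hz ?_
    calc (conj a * a) • z = star (a • z) := by rw [star_smul, ← ha, mul_smul, starRingEnd_apply]
      _ = (1 : ℂ) • z := by rw [ha, star_star, one_smul]
  -- A square root `b` of `a` also has modulus one, so
  -- `star (b • z) = (conj b * b ^ 2) • z = b • z`.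
  obtain ⟨b, hb⟩ := IsAlgClosed.exists_pow_nat_eq a two_pos
  have hb_unit : conj b * b = 1 := by
    have hsq : Complex.normSq b ^ 2 = 1 := by
      rw [← map_pow, hb]
      exact_mod_cast Complex.normSq_eq_conj_mul_self.trans ha_unit
    rw [← Complex.normSq_eq_conj_mul_self,
      (pow_eq_one_iff_of_nonneg (Complex.normSq_nonneg b) two_ne_zero).mp hsq, Complex.ofReal_one]
  refine ⟨conj b, left_ne_zero_of_mul_eq_one hb_unit, b • z, ?_, ?_⟩
  · calc star (b • z) = (conj b * b * b) • z := by
          rw [star_smul, ← ha, smul_smul, ← hb, starRingEnd_apply, sq, mul_assoc]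
      _ = b • z := by rw [hb_unit, one_mul]
  · rw [smul_smul, hb_unit, one_smul]

end StarModule

section Herm

variable {n : ℕ}

theorem herm_smul_left (c : ℂ) (z w : Fin (n + 1) → ℂ) :
    herm n (c • z) w = c * herm n z w := by
  simp only [herm, Pi.smul_apply, smul_eq_mul, mul_sub, Finset.mul_sum, mul_assoc]

theorem herm_smul_right (c : ℂ) (z w : Fin (n + 1) → ℂ) :
    herm n z (c • w) = conj c * herm n z w := by
  simp only [herm, Pi.smul_apply, smul_eq_mul, map_mul, mul_sub, Finset.mul_sum,
    mul_left_comm (conj c)]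

theorem herm_smul_self_re_nonneg_iff {c : ℂ} (hc : c ≠ 0) (z : Fin (n + 1) → ℂ) :
    0 ≤ (herm n (c • z) (c • z)).re ↔ 0 ≤ (herm n z z).re := by
  rw [herm_smul_left, herm_smul_right, ← mul_assoc, Complex.mul_conj, Complex.re_ofReal_mul,
    mul_nonneg_iff_of_pos_left (Complex.normSq_pos.mpr hc)]

theorem smul_mem_lambdaCone_iff {c : ℂ} (hc : c ≠ 0) (z : Fin (n + 1) → ℂ) :
    c • z ∈ LambdaCone n ↔ z ∈ LambdaCone n := by
  simp only [LambdaCone, Set.mem_ofPred_eq, herm_smul_left, smul_ne_zero_iff_right hc,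
    mul_eq_zero_iff_left hc]

/-- The real vector `(v, t)` of `ℝⁿ × ℝ`, viewed in `ℂⁿ⁺¹`; the last coordinate `t` is the negative
direction of `herm`. -/
def realVec (v : EuclideanSpace ℝ (Fin n)) (t : ℝ) : Fin (n + 1) → ℂ :=
  Fin.snoc (α := fun _ => ℂ) (fun j => (v j : ℂ)) t

theorem isRealVec_realVec (v : EuclideanSpace ℝ (Fin n)) (t : ℝ) : IsRealVec n (realVec v t) := by
  funext j
  refine Fin.lastCases ?_ (fun i => ?_) j <;> simp [conjVec, realVec]

theorem IsRealVec.exists_eq_realVec {w : Fin (n + 1) → ℂ} (hw : IsRealVec n w) :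
    ∃ v t, w = realVec v t := by
  have hre (j) : w j = (w j).re := (Complex.conj_eq_iff_re.mp (congrFun hw j)).symm
  refine ⟨WithLp.toLp 2 fun j => (w j.castSucc).re, (w (Fin.last n)).re, ?_⟩
  funext j
  refine Fin.lastCases ?_ (fun i => ?_) j <;> simp [realVec, ← hre]

theorem realVec_eq_zero_iff {v : EuclideanSpace ℝ (Fin n)} {t : ℝ} :
    realVec v t = 0 ↔ v = 0 ∧ t = 0 := by
  simp [realVec, funext_iff, Fin.forall_fin_succ', PiLp.ext_iff]

theorem ofReal_smul_realVec (r : ℝ) (v : EuclideanSpace ℝ (Fin n)) (t : ℝ) :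
    (r : ℂ) • realVec v t = realVec (r • v) (r * t) := by
  funext j
  refine Fin.lastCases ?_ (fun i => ?_) j <;> simp [realVec]

theorem herm_realVec (v u : EuclideanSpace ℝ (Fin n)) (t s : ℝ) :
    herm n (realVec v t) (realVec u s) = (⟪v, u⟫_ℝ - t * s : ℝ) := by
  simp [herm, realVec, PiLp.inner_apply, mul_comm]

theorem herm_realVec_self (v : EuclideanSpace ℝ (Fin n)) (t : ℝ) :
    herm n (realVec v t) (realVec v t) = (‖v‖ ^ 2 - t ^ 2 : ℝ) := by
  rw [herm_realVec, real_inner_self_eq_norm_sq, sq t]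

theorem realVec_mem_scone_iff {v : EuclideanSpace ℝ (Fin n)} {t : ℝ} :
    realVec v t ∈ Scone n ↔ t ≠ 0 ∧ ‖v‖ = |t| := by
  have hnull : herm n (realVec v t) (realVec v t) = 0 ↔ ‖v‖ = |t| := by
    rw [herm_realVec_self, Complex.ofReal_eq_zero, sub_eq_zero, sq_eq_sq_iff_abs_eq_abs, abs_norm]
  have hzero (h : ‖v‖ = |t|) : realVec v t = 0 ↔ t = 0 := by
    rw [realVec_eq_zero_iff, ← norm_eq_zero, h, abs_eq_zero, and_self]
  simp only [Scone, Set.mem_ofPred_eq, isRealVec_realVec, true_and, hnull]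
  exact and_congr_left fun h => (hzero h).not

theorem exists_mem_scone_herm_eq_zero_iff (z : Fin (n + 1) → ℂ) :
    (∃ w ∈ Scone n, herm n z w = 0) ↔
      ∃ u ∈ sphere (0 : EuclideanSpace ℝ (Fin n)) 1, herm n z (realVec u 1) = 0 := by
  constructor
  · rintro ⟨w, hw, hzw⟩
    obtain ⟨v, t, rfl⟩ := hw.2.1.exists_eq_realVec
    obtain ⟨ht, hv⟩ := realVec_mem_scone_iff.mp hw
    refine ⟨t⁻¹ • v, ?_, ?_⟩
    · rw [mem_sphere_zero_iff_norm, norm_smul, norm_inv, Real.norm_eq_abs, hv,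
        inv_mul_cancel₀ (abs_ne_zero.mpr ht)]
    · rw [← inv_mul_cancel₀ ht, ← ofReal_smul_realVec, herm_smul_right, hzw, mul_zero]
  · rintro ⟨u, hu, hzu⟩
    exact ⟨realVec u 1, realVec_mem_scone_iff.mpr ⟨one_ne_zero, by simpa using hu⟩, hzu⟩

theorem realVec_mem_lambdaCone_iff (hn : 2 ≤ n) {v : EuclideanSpace ℝ (Fin n)} {t : ℝ}
    (h : realVec v t ≠ 0) : realVec v t ∈ LambdaCone n ↔ |t| ≤ ‖v‖ := by
  have hrank : 1 < Module.rank ℝ (EuclideanSpace ℝ (Fin n)) := by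
    rw [← Module.finrank_eq_rank, finrank_euclideanSpace_fin]
    exact_mod_cast hn
  calc realVec v t ∈ LambdaCone n
      ↔ ∃ u ∈ sphere (0 : EuclideanSpace ℝ (Fin n)) 1, herm n (realVec v t) (realVec u 1) = 0 :=
        (and_iff_right h).trans (exists_mem_scone_herm_eq_zero_iff _)
    _ ↔ t ∈ (fun u => ⟪v, u⟫_ℝ) '' sphere 0 1 := by
        simp only [herm_realVec, mul_one, Complex.ofReal_eq_zero, sub_eq_zero, Set.mem_image]
    _ ↔ |t| ≤ ‖v‖ := by rw [image_inner_sphere hrank, Set.mem_Icc, abs_le]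

theorem herm_realVec_self_re_nonneg_iff (v : EuclideanSpace ℝ (Fin n)) (t : ℝ) :
    0 ≤ (herm n (realVec v t) (realVec v t)).re ↔ |t| ≤ ‖v‖ := by
  rw [herm_realVec_self, Complex.ofReal_re, sub_nonneg, sq_le_sq, abs_norm]

end Herm

/-- (Lemma 3.10 / `le:6`): For nonzero `z` with `z` and `z̄` linearly dependent,
`z` lies in the cone over `Λ` iff `⟨z,z⟩ ≥ 0`. -/
theorem mem_lambdaCone_iff_nonneg (n : ℕ) (hn : 2 ≤ n) (z : Fin (n + 1) → ℂ) (hz : z ≠ 0)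
    (hdep : ¬ LinearIndependent ℂ ![z, conjVec n z]) :
    z ∈ LambdaCone n ↔ 0 ≤ (herm n z z).re := by
  -- `conjVec n z` is definitionally `star z`.
  obtain ⟨c, hc, x, hx, rfl⟩ := exists_eq_smul_isSelfAdjoint_of_not_linearIndependent hz hdep
  obtain ⟨v, t, rfl⟩ := IsRealVec.exists_eq_realVec hx
  rw [smul_mem_lambdaCone_iff hc, herm_smul_self_re_nonneg_iff hc,
    realVec_mem_lambdaCone_iff hn (right_ne_zero_of_smul hz), herm_realVec_self_re_nonneg_iff]
end

section
/- Let n > 2. Let ℙ_ℂⁿ be the projectivization of ℂ^{n+1} with the quotient topology and [·] the quotient map. Let Ω̃ = {z ∈ ℂ^{n+1} \ {0} : f(z) > 0} ∪ {z ∈ ℂ^{n+1} \ {0} : z real and ⟨z,z⟩ < 0}, let Ω = {[z] : z ∈ Ω̃}, let H = {[z] : z real, ⟨z,z⟩ < 0} (a copy of H_ℝⁿ), and let o = [(0,…,0,1)]. Then there exists a map Π : Ω → ℙ_ℂⁿ such that: (i) for every z with f(z) > 0 and every η ∈ ℂ with η² = −⟨z,z̄⟩, one has conj(η)·z + η·z̄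 ≠ 0 and Π([z]) = [conj(η)·z + η·z̄]; (ii) Π([z]) = [z] for every real z with ⟨z,z⟩ < 0; (iii) the image of Π is exactly H; (iv) Π is equivariant: for every real matrix A with AᵀJA = J (J = diag(1,…,1,−1)) and every z ∈ Ω̃, Π([Az]) is the image under A of Π([z]) (i.e. if Π([z]) = [v] then Π([Az]) = [Av]); (v) Π is a locally trivial fibre bundle: for every x ∈ H there exist an open neighborhood U of x in H and a homeomorphism φ : Π⁻¹(U) → U × Π⁻¹({o}) (all with the subspace topologies) whose first component is Π. -/
open scoped ComplexConjugate

/-- The quotient topology on a projectivization. -/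
noncomputable instance projTop (K V : Type*) [DivisionRing K] [AddCommGroup V] [Module K V]
    [TopologicalSpace V] : TopologicalSpace (Projectivization K V) :=
  inferInstanceAs (TopologicalSpace (Quotient (projectivizationSetoid K V)))

/-- The cone over the Kulkarni discontinuity region `Ω`. -/
def OmegaCone (n : ℕ) : Set (Fin (n + 1) → ℂ) :=
  {z | z ≠ 0 ∧ 0 < fdet n z} ∪ {z | z ≠ 0 ∧ IsRealVec n z ∧ (herm n z z).re < 0}

/-- The Kulkarni discontinuity region `Ω ⊂ ℙ_ℂⁿ`. -/
def OmegaSet (n : ℕ) : Set (Projectivization ℂ (Fin (n + 1) → ℂ)) :=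
  {p | ∃ z : Fin (n + 1) → ℂ, ∃ hz : z ≠ 0, z ∈ OmegaCone n ∧ Projectivization.mk ℂ z hz = p}

/-- The copy of real hyperbolic space `H_ℝⁿ ⊂ ℙ_ℂⁿ`. -/
def HSet (n : ℕ) : Set (Projectivization ℂ (Fin (n + 1) → ℂ)) :=
  {p | ∃ z : Fin (n + 1) → ℂ, ∃ hz : z ≠ 0,
    IsRealVec n z ∧ (herm n z z).re < 0 ∧ Projectivization.mk ℂ z hz = p}

/-- The origin `o = [0 : ⋯ : 0 : 1]`. -/
noncomputable def oPoint (n : ℕ) : Projectivization ℂ (Fin (n + 1) → ℂ) :=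
  Projectivization.mk ℂ (Pi.single (Fin.last n) 1)
    (fun h => by simpa using congrFun h (Fin.last n))

/-!
Let `b` be the complex bilinear form underlying `⟨·, ·⟩`. If `b(z, z) = -1`, then `Π` sends
`[z] = [x + iy]` to `[x]`, where `x` is real timelike and `y` is real and orthogonal to `x`. For
general `z` one first multiplies by `conj η`, where `η² = -b(z, z)`, which gives the real vector
`w = conj η z + η z̄`. The multiple `w_{n+1} w` depends on `η` only through `η²` and `|η|² = |η²|`,
so it is continuous in `z`, and so is `Π`; its last coordinate `w_{n+1}²` is positive.

Given `x ∈ H_ℝⁿ`, lift it to a real vector `y` with `y_{n+1} > 0`. The reflection in the vector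
`√(-b(y, y)) e_{n+1} + y`, which is timelike because its two summands lie in the same half-cone, is
a real isometry exchanging `o` and `x`. It commutes with `Π` and hence exchanges the fibres over `o`
and `x`. As it depends continuously on `x`, these reflections trivialize the bundle globally.
-/

open Complex Module
open scoped LinearAlgebra.Projectivization Matrix

section Topology

variable {K V : Type*} [DivisionRing K] [AddCommGroup V] [Module K V] [TopologicalSpace V]

theorem continuous_projectivization_mk {X : Type*} [TopologicalSpace X] {f : X → V}
    (hf : Continuous f) (hf₀ : ∀ x, f x ≠ 0) :
    Continuous fun x => Projectivization.mk K (f x) (hf₀ x) :=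
  continuous_quotient_mk'.comp (hf.subtype_mk hf₀)

theorem isOpenQuotientMap_projectivization_mk' [ContinuousConstSMul K V] :
    IsOpenQuotientMap (Projectivization.mk' K : {v : V // v ≠ 0} → ℙ K V) := by
  refine ⟨Quotient.mk_surjective, continuous_quotient_mk', fun U hU => ?_⟩
  have saturation : Projectivization.mk' K ⁻¹' (Projectivization.mk' K '' U) =
      ⋃ a : Kˣ, (fun v : {v : V // v ≠ 0} =>
        (⟨a • v.1, (smul_ne_zero_iff_ne a).mpr v.2⟩ : {v : V // v ≠ 0})) ⁻¹' U := by
    ext v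
    simp only [Set.mem_preimage, Set.mem_image, Set.mem_iUnion, Projectivization.mk'_eq_mk]
    constructor
    · rintro ⟨w, hw, hwv⟩
      obtain ⟨a, ha⟩ := (Projectivization.mk_eq_mk_iff K _ _ w.2 v.2).mp hwv
      exact ⟨a, by simpa only [ha] using hw⟩
    · rintro ⟨a, ha⟩
      exact ⟨_, ha, (Projectivization.mk_eq_mk_iff K _ _ _ v.2).mpr ⟨a, rfl⟩⟩
  have isOpen_saturation : IsOpen (Projectivization.mk' K ⁻¹' (Projectivization.mk' K '' U)) := by
    rw [saturation]
    exact isOpen_iUnion fun a => hU.preimage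
      ((continuous_subtype_val.const_smul a).subtype_mk _)
  exact isOpen_saturation

/-- The trivialization over `s` of a map `P` whose fibre over `o` is exchanged with the fibre over
each `x ∈ s` by an involution `τ x` of the total space depending continuously on `x`. -/
def homeomorphProdFiber {E Y : Type*} [TopologicalSpace E] [TopologicalSpace Y] {P : E → Y}
    (hP : Continuous P) {s : Set Y} {o : Y} {τ : s → E → E}
    (hτ : Continuous (Function.uncurry τ)) (involutive : ∀ x, Function.Involutive (τ x))
    (mem_fiber_iff : ∀ x e, P (τ x e) = x ↔ P e = o) :
    ↥(P ⁻¹' s) ≃ₜ ↥s × ↥(P ⁻¹' {o}) where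
  toFun e := (⟨P e, e.2⟩, ⟨τ ⟨P e, e.2⟩ e,
    (mem_fiber_iff ⟨P e, e.2⟩ _).mp (congrArg P (involutive _ _))⟩)
  invFun y := ⟨τ y.1 y.2, by
    rw [Set.mem_preimage, (mem_fiber_iff y.1 y.2).mpr y.2.2]
    exact y.1.2⟩
  left_inv e := Subtype.ext (involutive _ _)
  right_inv y := by
    have proj_eq : P (τ y.1 y.2) = y.1 := (mem_fiber_iff y.1 y.2).mpr y.2.2
    simp only [proj_eq, Subtype.coe_eta, involutive y.1 y.2.1, Prod.mk.eta]
  continuous_toFun := by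
    have base_continuous : Continuous fun e : ↥(P ⁻¹' s) => (⟨P e, e.2⟩ : s) :=
      (hP.comp continuous_subtype_val).subtype_mk _
    exact base_continuous.prodMk
      ((hτ.comp (base_continuous.prodMk continuous_subtype_val)).subtype_mk _)
  continuous_invFun :=
    (hτ.comp (continuous_fst.prodMk (continuous_subtype_val.comp continuous_snd))).subtype_mk _

end Topology

section Reflection

variable {K M : Type*} [Field K] [AddCommGroup M] [Module K M] {B : LinearMap.BilinForm K M}

/-- The reflection in the hyperplane orthogonal to `u`. It is a reflection only for `B u u ≠ 0`;
it is the identity when `B u u = 0`. -/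
def orthogonalReflection (B : LinearMap.BilinForm K M) (u : M) : M →ₗ[K] M :=
  Module.preReflection u ((2 / B u u) • B u)

theorem orthogonalReflection_apply (B : LinearMap.BilinForm K M) (u v : M) :
    orthogonalReflection B u v = v - (2 / B u u * B u v) • u :=
  Module.preReflection_apply _ _ _

theorem orthogonalReflection_smul_left (B : LinearMap.BilinForm K M) {a : K} (ha : a ≠ 0) (u : M) :
    orthogonalReflection B (a • u) = orthogonalReflection B u := by
  ext v
  simp only [orthogonalReflection_apply, map_smul, LinearMap.smul_apply, smul_eq_mul, smul_smul]
  congr 2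
  field_simp

theorem orthogonalReflection_involutive {u : M} (hu : B u u ≠ 0) :
    Function.Involutive (orthogonalReflection B u) :=
  Module.involutive_preReflection (by simp [hu])

theorem isOrthogonal_orthogonalReflection (hB : B.IsSymm) {u : M} (hu : B u u ≠ 0) :
    B.IsOrthogonal (orthogonalReflection B u) := by
  intro v w
  simp only [orthogonalReflection_apply, map_sub, map_smul, LinearMap.sub_apply,
    LinearMap.smul_apply, smul_eq_mul, hB.eq v u]
  field_simp
  ring

theorem orthogonalReflection_add_apply_left (hB : B.IsSymm) {x y : M} (hxy : B x x = B y y)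
    (h : B (x + y) (x + y) ≠ 0) : orthogonalReflection B (x + y) x = -y := by
  have double : 2 * B (x + y) x = B (x + y) (x + y) := by
    simp only [map_add, LinearMap.add_apply, hB.eq y x, ← hxy]
    ring
  rw [orthogonalReflection_apply, div_mul_eq_mul_div, double, div_self h, one_smul,
    sub_add_cancel_left]

end Reflection

section RealLift

variable {V W : Type*} [AddCommGroup V] [Module ℂ V] [StarAddMonoid V]
  [AddCommGroup W] [Module ℂ W] [StarAddMonoid W]

/-- The real vector `conj η z + η z̄`, i.e. twice the real part of `conj η z`. -/
def realLift (η : ℂ) (z : V) : V := conj η • z + η • star z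

theorem star_realLift [StarModule ℂ V] (η : ℂ) (z : V) : star (realLift η z) = realLift η z := by
  simp [realLift, add_comm]

theorem realLift_ofReal_mul (r : ℝ) (η : ℂ) (z : V) :
    realLift (r * η) z = (r : ℂ) • realLift η z := by
  simp only [realLift, map_mul, conj_ofReal, mul_smul, smul_add]

theorem realLift_mul_smul [StarModule ℂ V] (a η : ℂ) (z : V) :
    realLift (a * η) (a • z) = ((‖a‖ ^ 2 : ℝ) : ℂ) • realLift η z := by
  have norm_sq : ((‖a‖ ^ 2 : ℝ) : ℂ) = conj a * a := by
    rw [← normSq_eq_norm_sq, normSq_eq_conj_mul_self]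
  simp only [realLift, norm_sq, map_mul, star_smul, smul_add, smul_smul, starRingEnd_apply]
  congr 2 <;> ring

theorem map_realLift {L : V →ₗ[ℂ] W} (hL : ∀ v, L (star v) = star (L v)) (η : ℂ) (z : V) :
    L (realLift η z) = realLift η (L z) := by
  simp only [realLift, map_add, map_smul, hL]

end RealLift

section LorentzForm

variable {n : ℕ} {x z : Fin (n + 1) → ℂ}

/-- The complex bilinear form `⟨z, w̄⟩` underlying the Hermitian form of signature `(n, 1)`. -/
noncomputable def lorentzForm (n : ℕ) : LinearMap.BilinForm ℂ (Fin (n + 1) → ℂ) :=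
  Matrix.toBilin' (Matrix.diagonal fun j => if j = Fin.last n then -1 else 1)

theorem lorentzForm_apply (z w : Fin (n + 1) → ℂ) : lorentzForm n z w =
    (∑ j : Fin n, z j.castSucc * w j.castSucc) - z (Fin.last n) * w (Fin.last n) := by
  simp [lorentzForm, Matrix.toBilin'_apply', dotProduct, Matrix.mulVec_diagonal,
    Fin.sum_univ_castSucc, Fin.castSucc_ne_last, sub_eq_add_neg]

theorem herm_eq_lorentzForm (z w : Fin (n + 1) → ℂ) : herm n z w = lorentzForm n z (star w) := by
  rw [lorentzForm_apply]
  rfl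

theorem conjVec_eq_star (z : Fin (n + 1) → ℂ) : conjVec n z = star z := rfl

theorem herm_conjVec (z w : Fin (n + 1) → ℂ) : herm n z (conjVec n w) = lorentzForm n z w := by
  rw [herm_eq_lorentzForm, conjVec_eq_star, star_star]

theorem isSymm_lorentzForm (n : ℕ) : (lorentzForm n).IsSymm :=
  ⟨fun z w => by simp only [lorentzForm_apply, mul_comm]⟩

theorem nondegenerate_lorentzForm (n : ℕ) : (lorentzForm n).Nondegenerate := by
  refine LinearMap.BilinForm.nondegenerate_toBilin'_of_det_ne_zero' _ ?_
  simp [Matrix.det_diagonal, Finset.prod_ite_eq']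

theorem lorentzForm_star_star (z w : Fin (n + 1) → ℂ) :
    lorentzForm n (star z) (star w) = conj (lorentzForm n z w) := by
  simp [lorentzForm_apply]

theorem lorentzForm_single_last (w : Fin (n + 1) → ℂ) :
    lorentzForm n (Pi.single (Fin.last n) 1) w = -w (Fin.last n) := by
  simp [lorentzForm_apply, Fin.castSucc_ne_last]

theorem continuous_lorentzForm {X : Type*} [TopologicalSpace X] {f g : X → Fin (n + 1) → ℂ}
    (hf : Continuous f) (hg : Continuous g) : Continuous fun t => lorentzForm n (f t) (g t) := by
  simp only [lorentzForm_apply]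
  fun_prop

theorem lorentzForm_self_eq_ofReal (hx : star x = x) :
    lorentzForm n x x = ((lorentzForm n x x).re : ℂ) := by
  rw [eq_comm, ← conj_eq_iff_re, ← lorentzForm_star_star, hx]

theorem lorentzForm_star_eq_ofReal (z : Fin (n + 1) → ℂ) :
    lorentzForm n z (star z) = ((lorentzForm n z (star z)).re : ℂ) := by
  rw [eq_comm, ← conj_eq_iff_re, ← lorentzForm_star_star, star_star, (isSymm_lorentzForm n).eq]

theorem fdet_eq (z : Fin (n + 1) → ℂ) :
    fdet n z = ‖lorentzForm n z z‖ ^ 2 - (lorentzForm n z (star z)).re ^ 2 := by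
  rw [fdet, herm_conjVec, herm_eq_lorentzForm, normSq_eq_norm_sq]

/-- Real vectors of negative norm: the lifts of the points of `H_ℝⁿ`, normalized to be real. -/
structure IsRealTimelike (x : Fin (n + 1) → ℂ) : Prop where
  star_eq : star x = x
  form_neg : (lorentzForm n x x).re < 0

theorem isRealTimelike_iff :
    IsRealTimelike x ↔ IsRealVec n x ∧ (herm n x x).re < 0 := by
  constructor
  · rintro ⟨hx, hneg⟩
    exact ⟨hx, by rwa [herm_eq_lorentzForm, hx]⟩
  · rintro ⟨hx, hneg⟩
    have hstar : star x = x := hx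
    exact ⟨hx, by rwa [herm_eq_lorentzForm, hstar] at hneg⟩

namespace IsRealTimelike

theorem ne_zero (hx : IsRealTimelike x) : x ≠ 0 := by
  rintro rfl
  simpa using hx.form_neg

theorem last_ne_zero (hx : IsRealTimelike x) : x (Fin.last n) ≠ 0 := by
  intro hlast
  have him : ∀ j, (x j).im = 0 := fun j => conj_eq_iff_im.mp (congrFun hx.star_eq j)
  refine hx.form_neg.not_ge ?_
  simp only [lorentzForm_apply, hlast, mul_zero, sub_zero, re_sum, mul_re, him]
  exact Finset.sum_nonneg fun j _ => mul_self_nonneg _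

theorem ofReal_smul {r : ℝ} (hr : r ≠ 0) (hx : IsRealTimelike x) :
    IsRealTimelike ((r : ℂ) • x) where
  star_eq := by rw [star_smul, hx.star_eq, ← starRingEnd_apply, conj_ofReal]
  form_neg := by
    rw [map_smul, map_smul, LinearMap.smul_apply, smul_smul, ← ofReal_mul, smul_eq_mul,
      re_ofReal_mul]
    exact mul_neg_of_pos_of_neg (mul_self_pos.mpr hr) hx.form_neg

end IsRealTimelike

/-- The cone of vectors `z` for which `conj η z + η z̄`, where `η² = -⟨z, z̄⟩`, is real timelike.
Unlike `OmegaCone` it is stable under multiplication by nonzero complex scalars. -/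
def projectionCone (n : ℕ) : Set (Fin (n + 1) → ℂ) :=
  {z | lorentzForm n z z ≠ 0 ∧ (lorentzForm n z (star z)).re < ‖lorentzForm n z z‖}

theorem mem_projectionCone_of_fdet_pos (h : 0 < fdet n z) : z ∈ projectionCone n := by
  rw [fdet_eq, sub_pos] at h
  have abs_lt : |(lorentzForm n z (star z)).re| < ‖lorentzForm n z z‖ :=
    abs_lt_of_sq_lt_sq h (norm_nonneg _)
  exact ⟨norm_pos_iff.mp ((abs_nonneg _).trans_lt abs_lt), (le_abs_self _).trans_lt abs_lt⟩

theorem IsRealTimelike.mem_projectionCone (hx : IsRealTimelike x) : x ∈ projectionCone n := by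
  have form_ne_zero : lorentzForm n x x ≠ 0 := fun h => by simpa [h] using hx.form_neg
  refine ⟨form_ne_zero, ?_⟩
  rw [hx.star_eq]
  exact hx.form_neg.trans (norm_pos_iff.mpr form_ne_zero)

theorem omegaCone_subset_projectionCone (n : ℕ) : OmegaCone n ⊆ projectionCone n := by
  rintro z (⟨-, hz⟩ | ⟨-, hz⟩)
  · exact mem_projectionCone_of_fdet_pos hz
  · exact (isRealTimelike_iff.mpr hz).mem_projectionCone

theorem lorentzForm_smul_star_smul (a : ℂ) (z : Fin (n + 1) → ℂ) :
    lorentzForm n (a • z) (star (a • z)) = ((‖a‖ ^ 2 : ℝ) : ℂ) * lorentzForm n z (star z) := by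
  have norm_sq : a * star a = ((‖a‖ ^ 2 : ℝ) : ℂ) := by
    rw [← starRingEnd_apply, mul_conj, normSq_eq_norm_sq]
  rw [star_smul, map_smul, map_smul, LinearMap.smul_apply, smul_smul, mul_comm (star a), norm_sq,
    smul_eq_mul]

theorem norm_lorentzForm_smul_self (a : ℂ) (z : Fin (n + 1) → ℂ) :
    ‖lorentzForm n (a • z) (a • z)‖ = ‖a‖ ^ 2 * ‖lorentzForm n z z‖ := by
  rw [map_smul, map_smul, LinearMap.smul_apply, norm_smul, norm_smul, ← mul_assoc, sq]

theorem smul_mem_projectionCone {a : ℂ} (ha : a ≠ 0) (hz : z ∈ projectionCone n) :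
    a • z ∈ projectionCone n := by
  have norm_sq_pos : 0 < ‖a‖ ^ 2 := pow_pos (norm_pos_iff.mpr ha) 2
  constructor
  · rw [← norm_pos_iff, norm_lorentzForm_smul_self]
    exact mul_pos norm_sq_pos (norm_pos_iff.mpr hz.1)
  · rw [lorentzForm_smul_star_smul, norm_lorentzForm_smul_self, re_ofReal_mul]
    exact mul_lt_mul_of_pos_left hz.2 norm_sq_pos

theorem norm_sq_of_sq_eq_neg_form {η : ℂ} (hη : η ^ 2 = -lorentzForm n z z) :
    η * conj η = (‖lorentzForm n z z‖ : ℂ) := by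
  rw [mul_conj, normSq_eq_norm_sq, ← norm_pow, hη, norm_neg]

theorem lorentzForm_realLift_self {η : ℂ} (hη : η ^ 2 = -lorentzForm n z z) :
    lorentzForm n (realLift η z) (realLift η z) = ((2 * ‖lorentzForm n z z‖ *
      ((lorentzForm n z (star z)).re - ‖lorentzForm n z z‖) : ℝ) : ℂ) := by
  have hform : lorentzForm n z z = -η ^ 2 := by rw [hη, neg_neg]
  simp only [realLift, map_add, LinearMap.add_apply, map_smul, LinearMap.smul_apply, smul_eq_mul,
    lorentzForm_star_star, (isSymm_lorentzForm n).eq (star z) z]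
  push_cast
  rw [← lorentzForm_star_eq_ofReal, ← norm_sq_of_sq_eq_neg_form hη, hform, map_neg, map_pow]
  ring

theorem isRealTimelike_realLift {η : ℂ} (hη : η ^ 2 = -lorentzForm n z z)
    (hz : z ∈ projectionCone n) : IsRealTimelike (realLift η z) where
  star_eq := star_realLift η z
  form_neg := by
    rw [lorentzForm_realLift_self hη, ofReal_re]
    exact mul_neg_of_pos_of_neg (mul_pos two_pos (norm_pos_iff.mpr hz.1)) (sub_neg.mpr hz.2)

end LorentzForm

section HyperbolicLift

variable {n : ℕ} {x z : Fin (n + 1) → ℂ} {η : ℂ}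

theorem IsRealTimelike.last_eq_ofReal (hx : IsRealTimelike x) :
    x (Fin.last n) = ((x (Fin.last n)).re : ℂ) :=
  (conj_eq_iff_re.mp (congrFun hx.star_eq (Fin.last n))).symm

/-- The product `w_{n+1} η`, where `η² = -⟨z, z̄⟩` and `w = realLift η z`. The choice of the square
root `η` cancels in it. -/
noncomputable def liftCoeff (n : ℕ) (z : Fin (n + 1) → ℂ) : ℂ :=
  ‖lorentzForm n z z‖ * z (Fin.last n) - lorentzForm n z z * conj (z (Fin.last n))

/-- A lift of the projection of `[z]` to `H_ℝⁿ` that involves no square root and hence is continuous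
in `z`: it is `w_{n+1} w` for `w = realLift η z` and either root `η` of `η² = -⟨z, z̄⟩`. -/
noncomputable def hyperbolicLift (n : ℕ) (z : Fin (n + 1) → ℂ) : Fin (n + 1) → ℂ :=
  realLift (liftCoeff n z) z

theorem continuous_hyperbolicLift : Continuous (hyperbolicLift n) := by
  have form_continuous : Continuous fun z : Fin (n + 1) → ℂ => lorentzForm n z z :=
    continuous_lorentzForm continuous_id continuous_id
  have coeff_continuous : Continuous (liftCoeff n) := by
    unfold liftCoeff
    fun_prop
  exact ((continuous_conj.comp coeff_continuous).smul continuous_id).add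
    (coeff_continuous.smul continuous_star)

theorem liftCoeff_smul (a : ℂ) (z : Fin (n + 1) → ℂ) :
    liftCoeff n (a • z) = ((‖a‖ ^ 2 : ℝ) : ℂ) * (a * liftCoeff n z) := by
  have norm_sq : ((‖a‖ ^ 2 : ℝ) : ℂ) = a * conj a := by rw [mul_conj, normSq_eq_norm_sq]
  rw [liftCoeff, liftCoeff, norm_lorentzForm_smul_self, ofReal_mul, norm_sq]
  simp only [map_smul, LinearMap.smul_apply, smul_eq_mul, Pi.smul_apply, map_mul]
  ring

theorem hyperbolicLift_smul (a : ℂ) (z : Fin (n + 1) → ℂ) :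
    hyperbolicLift n (a • z) = ((‖a‖ ^ 4 : ℝ) : ℂ) • hyperbolicLift n z := by
  rw [hyperbolicLift, liftCoeff_smul, realLift_ofReal_mul, realLift_mul_smul, smul_smul,
    ← ofReal_mul, ← pow_add, hyperbolicLift]

theorem liftCoeff_eq (hη : η ^ 2 = -lorentzForm n z z) :
    liftCoeff n z = realLift η z (Fin.last n) * η := by
  have hform : lorentzForm n z z = -η ^ 2 := by rw [hη, neg_neg]
  rw [liftCoeff, ← norm_sq_of_sq_eq_neg_form hη, hform]
  simp only [realLift, Pi.add_apply, Pi.smul_apply, Pi.star_apply, smul_eq_mul, starRingEnd_apply]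
  ring

theorem hyperbolicLift_eq (hη : η ^ 2 = -lorentzForm n z z) (hz : z ∈ projectionCone n) :
    hyperbolicLift n z = ((realLift η z (Fin.last n)).re : ℂ) • realLift η z := by
  rw [hyperbolicLift, liftCoeff_eq hη, (isRealTimelike_realLift hη hz).last_eq_ofReal,
    realLift_ofReal_mul, ofReal_re]

theorem exists_hyperbolicLift_eq (hz : z ∈ projectionCone n) :
    ∃ w, IsRealTimelike w ∧ hyperbolicLift n z = ((w (Fin.last n)).re : ℂ) • w := by
  obtain ⟨η, hη⟩ := IsAlgClosed.exists_pow_nat_eq (-lorentzForm n z z) two_pos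
  exact ⟨realLift η z, isRealTimelike_realLift hη hz, hyperbolicLift_eq hη hz⟩

theorem IsRealTimelike.re_last_ne_zero (hx : IsRealTimelike x) : (x (Fin.last n)).re ≠ 0 :=
  fun h => hx.last_ne_zero (by rw [hx.last_eq_ofReal, h, ofReal_zero])

theorem isRealTimelike_hyperbolicLift (hz : z ∈ projectionCone n) :
    IsRealTimelike (hyperbolicLift n z) := by
  obtain ⟨w, hw, lift_eq⟩ := exists_hyperbolicLift_eq hz
  exact lift_eq ▸ hw.ofReal_smul hw.re_last_ne_zero

theorem hyperbolicLift_last_pos (hz : z ∈ projectionCone n) :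
    0 < (hyperbolicLift n z (Fin.last n)).re := by
  obtain ⟨w, hw, lift_eq⟩ := exists_hyperbolicLift_eq hz
  rw [lift_eq, Pi.smul_apply, smul_eq_mul, re_ofReal_mul]
  exact mul_self_pos.mpr hw.re_last_ne_zero

end HyperbolicLift

section HyperbolicProj

variable {n : ℕ} {x z : Fin (n + 1) → ℂ}

theorem mem_hSet_iff {p : ℙ ℂ (Fin (n + 1) → ℂ)} :
    p ∈ HSet n ↔ ∃ x, ∃ hx : IsRealTimelike x, Projectivization.mk ℂ x hx.ne_zero = p := by
  constructor
  · rintro ⟨x, _, hreal, hneg, hxp⟩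
    exact ⟨x, isRealTimelike_iff.mpr ⟨hreal, hneg⟩, hxp⟩
  · rintro ⟨x, hx, hxp⟩
    exact ⟨x, hx.ne_zero, (isRealTimelike_iff.mp hx).1, (isRealTimelike_iff.mp hx).2, hxp⟩

theorem hSet_subset_omegaSet (n : ℕ) : HSet n ⊆ OmegaSet n := by
  rintro p ⟨x, hx, hreal, hneg, hxp⟩
  exact ⟨x, hx, Or.inr ⟨hx, hreal, hneg⟩, hxp⟩

theorem mem_projectionCone_of_mk_mem {hz : z ≠ 0} (h : Projectivization.mk ℂ z hz ∈ OmegaSet n) :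
    z ∈ projectionCone n := by
  obtain ⟨v, hv, hvΩ, hvz⟩ := h
  obtain ⟨a, rfl⟩ := (Projectivization.mk_eq_mk_iff ℂ z v hz hv).mp hvz.symm
  exact smul_mem_projectionCone a.ne_zero (omegaCone_subset_projectionCone n hvΩ)

theorem rep_mem_projectionCone {p : ℙ ℂ (Fin (n + 1) → ℂ)} (hp : p ∈ OmegaSet n) :
    p.rep ∈ projectionCone n :=
  mem_projectionCone_of_mk_mem (hz := p.rep_nonzero) (p.mk_rep.symm ▸ hp)

theorem exists_hyperbolicLift_rep_mk_eq (hz : z ≠ 0) :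
    ∃ r : ℝ, 0 < r ∧
      hyperbolicLift n (Projectivization.mk ℂ z hz).rep = (r : ℂ) • hyperbolicLift n z := by
  obtain ⟨a, ha⟩ := Projectivization.exists_smul_eq_mk_rep ℂ z hz
  exact ⟨‖(a : ℂ)‖ ^ 4, pow_pos (norm_pos_iff.mpr a.ne_zero) 4,
    by rw [← ha, Units.smul_def, hyperbolicLift_smul]⟩

/-- The projection `Π` of `Ω` onto real hyperbolic space. -/
noncomputable def hyperbolicProj (n : ℕ) (p : OmegaSet n) : ℙ ℂ (Fin (n + 1) → ℂ) :=
  Projectivization.mk ℂ (hyperbolicLift n p.1.rep)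
    (isRealTimelike_hyperbolicLift (rep_mem_projectionCone p.2)).ne_zero

theorem hyperbolicProj_mk {hz : z ≠ 0} (h : Projectivization.mk ℂ z hz ∈ OmegaSet n) :
    hyperbolicProj n ⟨Projectivization.mk ℂ z hz, h⟩ =
      Projectivization.mk ℂ (hyperbolicLift n z)
        (isRealTimelike_hyperbolicLift (mem_projectionCone_of_mk_mem h)).ne_zero := by
  obtain ⟨r, -, lift_eq⟩ := exists_hyperbolicLift_rep_mk_eq hz
  exact (Projectivization.mk_eq_mk_iff' ℂ _ _ _ _).mpr ⟨r, lift_eq.symm⟩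

theorem hyperbolicProj_mk_eq_realLift {hz : z ≠ 0} (h : Projectivization.mk ℂ z hz ∈ OmegaSet n)
    {η : ℂ} (hη : η ^ 2 = -lorentzForm n z z) :
    hyperbolicProj n ⟨Projectivization.mk ℂ z hz, h⟩ = Projectivization.mk ℂ (realLift η z)
      (isRealTimelike_realLift hη (mem_projectionCone_of_mk_mem h)).ne_zero := by
  rw [hyperbolicProj_mk]
  exact (Projectivization.mk_eq_mk_iff' ℂ _ _ _ _).mpr
    ⟨_, (hyperbolicLift_eq hη (mem_projectionCone_of_mk_mem h)).symm⟩

theorem IsRealTimelike.hyperbolicProj_mk (hx : IsRealTimelike x)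
    (h : Projectivization.mk ℂ x hx.ne_zero ∈ OmegaSet n) :
    hyperbolicProj n ⟨_, h⟩ = Projectivization.mk ℂ x hx.ne_zero := by
  have root : ((√(-(lorentzForm n x x).re) : ℝ) : ℂ) ^ 2 = -lorentzForm n x x := by
    rw [← ofReal_pow, Real.sq_sqrt (neg_pos.mpr hx.form_neg).le, ofReal_neg,
      ← lorentzForm_self_eq_ofReal hx.star_eq]
  rw [hyperbolicProj_mk_eq_realLift h root]
  refine (Projectivization.mk_eq_mk_iff' ℂ _ _ _ _).mpr
    ⟨2 * (√(-(lorentzForm n x x).re) : ℝ), ?_⟩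
  rw [realLift, conj_ofReal, hx.star_eq, ← add_smul, two_mul]

theorem hyperbolicProj_mem_hSet (p : OmegaSet n) : hyperbolicProj n p ∈ HSet n :=
  mem_hSet_iff.mpr ⟨_, isRealTimelike_hyperbolicLift (rep_mem_projectionCone p.2), rfl⟩

theorem hyperbolicProj_of_mem_hSet {x : ℙ ℂ (Fin (n + 1) → ℂ)} (hx : x ∈ HSet n) :
    hyperbolicProj n ⟨x, hSet_subset_omegaSet n hx⟩ = x := by
  obtain ⟨y, hy, rfl⟩ := mem_hSet_iff.mp hx
  exact hy.hyperbolicProj_mk _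

theorem range_hyperbolicProj (n : ℕ) : Set.range (hyperbolicProj n) = HSet n :=
  (Set.range_subset_iff.mpr hyperbolicProj_mem_hSet).antisymm
    fun _ hx => ⟨_, hyperbolicProj_of_mem_hSet hx⟩

theorem continuous_hyperbolicProj : Continuous (hyperbolicProj n) := by
  refine (isOpenQuotientMap_projectivization_mk'.restrictPreimage
    (OmegaSet n)).continuous_comp_iff.mp ?_
  have lift_ne_zero (z : ↥(Projectivization.mk' ℂ ⁻¹' OmegaSet n)) : hyperbolicLift n z ≠ 0 :=
    (isRealTimelike_hyperbolicLift (mem_projectionCone_of_mk_mem z.2)).ne_zero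
  have lift_continuous :
      Continuous fun z : ↥(Projectivization.mk' ℂ ⁻¹' OmegaSet n) => hyperbolicLift n z :=
    continuous_hyperbolicLift.comp (continuous_subtype_val.comp continuous_subtype_val)
  exact (continuous_projectivization_mk lift_continuous lift_ne_zero).congr
    fun z => (hyperbolicProj_mk z.2).symm

end HyperbolicProj

section RealIsometry

variable {n : ℕ} {L : (Fin (n + 1) → ℂ) →ₗ[ℂ] Fin (n + 1) → ℂ} {x z : Fin (n + 1) → ℂ}

/-- The complex-linear extensions of the isometries of the real Lorentz form. -/
structure IsRealIsometry (L : (Fin (n + 1) → ℂ) →ₗ[ℂ] Fin (n + 1) → ℂ) : Prop where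
  map_star : ∀ z, L (star z) = star (L z)
  isOrthogonal : (lorentzForm n).IsOrthogonal L

theorem isRealIsometry_mulVecLin {A : Matrix (Fin (n + 1)) (Fin (n + 1)) ℝ}
    (hA : Aᵀ * (Matrix.diagonal fun j => if j = Fin.last n then (-1 : ℝ) else 1) * A =
      Matrix.diagonal fun j => if j = Fin.last n then (-1 : ℝ) else 1) :
    IsRealIsometry (A.map ofReal).mulVecLin where
  map_star z := by
    ext i
    simp [Matrix.mulVec, dotProduct]
  isOrthogonal := by
    have gram : (A.map ofReal)ᵀ *
        (Matrix.diagonal fun j => if j = Fin.last n then -1 else 1) * A.map ofReal =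
          Matrix.diagonal fun j => if j = Fin.last n then (-1 : ℂ) else 1 := by
      have gram_map := congrArg (fun M => M.map ofRealHom) hA
      simp only [Matrix.map_mul, Matrix.transpose_map, Matrix.diagonal_map, map_zero, apply_ite,
        map_neg, map_one] at gram_map
      exact gram_map
    intro z w
    have comp_eq := Matrix.toBilin'_comp
      (Matrix.diagonal fun j => if j = Fin.last n then (-1 : ℂ) else 1)
      (A.map ofReal) (A.map ofReal)
    rw [gram] at comp_eq
    exact LinearMap.congr_fun₂ comp_eq z w

namespace IsRealIsometry

theorem injective (hL : IsRealIsometry L) : Function.Injective L := by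
  refine (injective_iff_map_eq_zero L).mpr fun z hz => ?_
  exact (nondegenerate_lorentzForm n).1 z fun w => by
    rw [← hL.isOrthogonal z w, hz, map_zero, LinearMap.zero_apply]

theorem map_ne_zero (hL : IsRealIsometry L) (hz : z ≠ 0) : L z ≠ 0 :=
  (hL.injective.ne_iff' (map_zero L)).mpr hz

theorem form_star (hL : IsRealIsometry L) (z : Fin (n + 1) → ℂ) :
    lorentzForm n (L z) (star (L z)) = lorentzForm n z (star z) := by
  rw [← hL.map_star, hL.isOrthogonal]

theorem isRealTimelike (hL : IsRealIsometry L) (hx : IsRealTimelike x) :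
    IsRealTimelike (L x) where
  star_eq := by rw [← hL.map_star, hx.star_eq]
  form_neg := by
    rw [hL.isOrthogonal]
    exact hx.form_neg

theorem map_mem_omegaSet (hL : IsRealIsometry L) {p : ℙ ℂ (Fin (n + 1) → ℂ)}
    (hp : p ∈ OmegaSet n) : p.map L hL.injective ∈ OmegaSet n := by
  obtain ⟨z, hz, hzΩ | ⟨-, hzH⟩, rfl⟩ := hp
  · have fdet_eq_fdet : fdet n (L z) = fdet n z := by
      rw [fdet_eq, fdet_eq, hL.isOrthogonal, hL.form_star]
    exact ⟨L z, hL.map_ne_zero hz, Or.inl ⟨hL.map_ne_zero hz, fdet_eq_fdet ▸ hzΩ.2⟩, rfl⟩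
  · exact hSet_subset_omegaSet n
      (mem_hSet_iff.mpr ⟨L z, hL.isRealTimelike (isRealTimelike_iff.mpr hzH), rfl⟩)

theorem hyperbolicProj_map (hL : IsRealIsometry L) (p : OmegaSet n) :
    hyperbolicProj n ⟨p.1.map L hL.injective, hL.map_mem_omegaSet p.2⟩ =
      (hyperbolicProj n p).map L hL.injective := by
  obtain ⟨p, hp⟩ := p
  induction p using Projectivization.ind with
  | h z hz =>
    obtain ⟨η, hη⟩ := IsAlgClosed.exists_pow_nat_eq (-lorentzForm n z z) two_pos
    have hη' : η ^ 2 = -lorentzForm n (L z) (L z) := by rw [hη, hL.isOrthogonal]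
    simp only [Projectivization.map_mk, hyperbolicProj_mk_eq_realLift hp hη,
      hyperbolicProj_mk_eq_realLift _ hη', map_realLift hL.map_star]

end IsRealIsometry

end RealIsometry

section OriginSwap

variable {n : ℕ} {y z w : Fin (n + 1) → ℂ}

theorem isRealIsometry_orthogonalReflection {u : Fin (n + 1) → ℂ} (star_eq : star u = u)
    (hu : lorentzForm n u u ≠ 0) : IsRealIsometry (orthogonalReflection (lorentzForm n) u) where
  map_star z := by
    have conj_form (v : Fin (n + 1) → ℂ) : star (lorentzForm n u v) = lorentzForm n u (star v) := by
      rw [← starRingEnd_apply, ← lorentzForm_star_star, star_eq]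
    simp only [orthogonalReflection_apply, star_sub, star_smul, star_mul', star_div₀, conj_form,
      star_eq, star_ofNat]
  isOrthogonal := isOrthogonal_orthogonalReflection (isSymm_lorentzForm n) hu

/-- The lift `√(-⟨y, y⟩) e_{n+1}` of the origin, of the same norm as `y`. -/
noncomputable def originLift (y : Fin (n + 1) → ℂ) : Fin (n + 1) → ℂ :=
  ((√(-(lorentzForm n y y).re) : ℝ) : ℂ) • Pi.single (Fin.last n) 1

theorem continuous_originLift : Continuous (originLift (n := n)) := by
  have form_continuous : Continuous fun y : Fin (n + 1) → ℂ => lorentzForm n y y :=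
    continuous_lorentzForm continuous_id continuous_id
  unfold originLift
  fun_prop

theorem originLift_smul {r : ℝ} (hr : 0 ≤ r) (y : Fin (n + 1) → ℂ) :
    originLift ((r : ℂ) • y) = (r : ℂ) • originLift y := by
  have form_smul : -(lorentzForm n ((r : ℂ) • y) ((r : ℂ) • y)).re =
      r ^ 2 * -(lorentzForm n y y).re := by
    rw [map_smul, map_smul, LinearMap.smul_apply, smul_smul, ← ofReal_mul, smul_eq_mul,
      re_ofReal_mul, sq, mul_neg]
  rw [originLift, form_smul, Real.sqrt_mul (sq_nonneg r), Real.sqrt_sq hr, ofReal_mul, mul_smul,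
    originLift]

theorem star_originLift (y : Fin (n + 1) → ℂ) : star (originLift y) = originLift y := by
  simp [originLift]

/-- A normal vector of the reflection that takes `originLift y` to `-y`. -/
noncomputable def swapNormal (y : Fin (n + 1) → ℂ) : Fin (n + 1) → ℂ := originLift y + y

theorem continuous_swapNormal : Continuous (swapNormal (n := n)) :=
  continuous_originLift.add continuous_id

theorem swapNormal_smul {r : ℝ} (hr : 0 ≤ r) (y : Fin (n + 1) → ℂ) :
    swapNormal ((r : ℂ) • y) = (r : ℂ) • swapNormal y := by
  rw [swapNormal, originLift_smul hr, ← smul_add, swapNormal]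

namespace IsRealTimelike

theorem lorentzForm_originLift_self (hy : IsRealTimelike y) :
    lorentzForm n (originLift y) (originLift y) = lorentzForm n y y := by
  rw [originLift, map_smul, map_smul, LinearMap.smul_apply, lorentzForm_single_last,
    Pi.single_eq_same, smul_smul, ← ofReal_mul, Real.mul_self_sqrt (neg_pos.mpr hy.form_neg).le,
    smul_eq_mul, mul_neg_one, ofReal_neg, neg_neg, ← lorentzForm_self_eq_ofReal hy.star_eq]

theorem star_swapNormal (hy : IsRealTimelike y) : star (swapNormal y) = swapNormal y := by
  rw [swapNormal, star_add, star_originLift, hy.star_eq]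

theorem lorentzForm_swapNormal_ne_zero (hy : IsRealTimelike y) (hlast : 0 < (y (Fin.last n)).re) :
    lorentzForm n (swapNormal y) (swapNormal y) ≠ 0 := by
  have sqrt_pos : 0 < √(-(lorentzForm n y y).re) := Real.sqrt_pos.mpr (neg_pos.mpr hy.form_neg)
  have cross : lorentzForm n (originLift y) y =
      ((-(√(-(lorentzForm n y y).re) * (y (Fin.last n)).re) : ℝ) : ℂ) := by
    rw [originLift, map_smul, LinearMap.smul_apply, lorentzForm_single_last, hy.last_eq_ofReal,
      smul_eq_mul, mul_neg, ofReal_neg, ofReal_mul, ofReal_re]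
  have form_eq : (lorentzForm n (swapNormal y) (swapNormal y)).re =
      2 * (lorentzForm n y y).re - 2 * (√(-(lorentzForm n y y).re) * (y (Fin.last n)).re) := by
    simp only [swapNormal, map_add, LinearMap.add_apply,
      (isSymm_lorentzForm n).eq y (originLift y), hy.lorentzForm_originLift_self, cross, add_re,
      ofReal_re]
    ring
  intro h
  rw [h, zero_re] at form_eq
  linarith [hy.form_neg, mul_pos sqrt_pos hlast]

theorem orthogonalReflection_swapNormal (hy : IsRealTimelike y)
    (hlast : 0 < (y (Fin.last n)).re) :
    orthogonalReflection (lorentzForm n) (swapNormal y) (originLift y) = -y :=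
  orthogonalReflection_add_apply_left (isSymm_lorentzForm n) hy.lorentzForm_originLift_self
    (hy.lorentzForm_swapNormal_ne_zero hlast)

end IsRealTimelike

theorem lorentzForm_swapNormal_hyperbolicLift_ne_zero (hz : z ∈ projectionCone n) :
    lorentzForm n (swapNormal (hyperbolicLift n z)) (swapNormal (hyperbolicLift n z)) ≠ 0 :=
  (isRealTimelike_hyperbolicLift hz).lorentzForm_swapNormal_ne_zero (hyperbolicLift_last_pos hz)

theorem isRealIsometry_orthogonalReflection_swapNormal (hz : z ∈ projectionCone n) :
    IsRealIsometry (orthogonalReflection (lorentzForm n) (swapNormal (hyperbolicLift n z))) :=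
  isRealIsometry_orthogonalReflection (isRealTimelike_hyperbolicLift hz).star_swapNormal
    (lorentzForm_swapNormal_hyperbolicLift_ne_zero hz)

/-- A reflection of `ℂ^{n+1}` whose projective action exchanges the origin with the point `x` of
`H_ℝⁿ`. -/
noncomputable def swapReflection (n : ℕ) (x : ℙ ℂ (Fin (n + 1) → ℂ)) :
    (Fin (n + 1) → ℂ) →ₗ[ℂ] Fin (n + 1) → ℂ :=
  orthogonalReflection (lorentzForm n) (swapNormal (hyperbolicLift n x.rep))

theorem swapReflection_mk (hz : z ≠ 0) : swapReflection n (Projectivization.mk ℂ z hz) =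
    orthogonalReflection (lorentzForm n) (swapNormal (hyperbolicLift n z)) := by
  obtain ⟨r, hr, lift_eq⟩ := exists_hyperbolicLift_rep_mk_eq hz
  rw [swapReflection, lift_eq, swapNormal_smul hr.le,
    orthogonalReflection_smul_left _ (ofReal_ne_zero.mpr hr.ne')]

theorem swapReflection_involutive (x : HSet n) : Function.Involutive (swapReflection n x) :=
  orthogonalReflection_involutive (lorentzForm_swapNormal_hyperbolicLift_ne_zero
    (rep_mem_projectionCone (hSet_subset_omegaSet n x.2)))

theorem isRealIsometry_swapReflection (x : HSet n) : IsRealIsometry (swapReflection n x) :=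
  isRealIsometry_orthogonalReflection_swapNormal
    (rep_mem_projectionCone (hSet_subset_omegaSet n x.2))

theorem map_swapReflection_oPoint (x : HSet n) :
    (oPoint n).map (swapReflection n x) (isRealIsometry_swapReflection x).injective = x := by
  have x_mem := rep_mem_projectionCone (hSet_subset_omegaSet n x.2)
  have swap_eq : swapReflection n x (originLift (hyperbolicLift n x.1.rep)) =
      -hyperbolicLift n x.1.rep :=
    (isRealTimelike_hyperbolicLift x_mem).orthogonalReflection_swapNormal
      (hyperbolicLift_last_pos x_mem)
  rw [originLift, map_smul] at swap_eq
  refine Eq.trans (Eq.symm ?_) (hyperbolicProj_of_mem_hSet x.2)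
  exact (Projectivization.mk_eq_mk_iff' ℂ _ _ _ _).mpr ⟨-_, by rw [neg_smul, swap_eq, neg_neg]⟩

/-- The involution of `Ω` induced by `swapReflection n x`. -/
noncomputable def originSwap (x : HSet n) (p : OmegaSet n) : OmegaSet n :=
  ⟨p.1.map (swapReflection n x) (isRealIsometry_swapReflection x).injective,
    (isRealIsometry_swapReflection x).map_mem_omegaSet p.2⟩

theorem originSwap_mk {hz : z ≠ 0} {hw : w ≠ 0} (hzH : Projectivization.mk ℂ z hz ∈ HSet n)
    (hwΩ : Projectivization.mk ℂ w hw ∈ OmegaSet n) :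
    (originSwap ⟨_, hzH⟩ ⟨_, hwΩ⟩ : ℙ ℂ (Fin (n + 1) → ℂ)) = Projectivization.mk ℂ
      (orthogonalReflection (lorentzForm n) (swapNormal (hyperbolicLift n z)) w)
      ((isRealIsometry_orthogonalReflection_swapNormal (mem_projectionCone_of_mk_mem
        (hSet_subset_omegaSet n hzH))).map_ne_zero hw) := by
  simp only [originSwap, Projectivization.map_mk, swapReflection_mk]

theorem originSwap_involutive (x : HSet n) : Function.Involutive (originSwap x) := by
  rintro ⟨p, hp⟩
  induction p using Projectivization.ind with
  | h z hz =>
    refine Subtype.ext ?_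
    simp only [originSwap, Projectivization.map_mk, swapReflection_involutive x z]

theorem hyperbolicProj_originSwap_eq_iff (x : HSet n) (p : OmegaSet n) :
    hyperbolicProj n (originSwap x p) = x ↔ hyperbolicProj n p = oPoint n := by
  have swap_isometry := isRealIsometry_swapReflection x
  calc hyperbolicProj n (originSwap x p) = x
    _ ↔ (hyperbolicProj n p).map (swapReflection n x) swap_isometry.injective =
        (oPoint n).map (swapReflection n x) swap_isometry.injective := by
      rw [map_swapReflection_oPoint, originSwap, swap_isometry.hyperbolicProj_map]
    _ ↔ hyperbolicProj n p = oPoint n :=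
      (Projectivization.map_injective _ swap_isometry.injective).eq_iff

theorem continuous_orthogonalReflection_lorentzForm {X : Type*} [TopologicalSpace X]
    {f g : X → Fin (n + 1) → ℂ} (hf : Continuous f) (hg : Continuous g)
    (hf₀ : ∀ t, lorentzForm n (f t) (f t) ≠ 0) :
    Continuous fun t => orthogonalReflection (lorentzForm n) (f t) (g t) := by
  simp only [orthogonalReflection_apply]
  exact hg.sub (((continuous_const.div (continuous_lorentzForm hf hf) hf₀).mul
    (continuous_lorentzForm hf hg)).smul hf)

theorem continuous_originSwap : Continuous (Function.uncurry (originSwap (n := n))) := by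
  refine ((isOpenQuotientMap_projectivization_mk'.restrictPreimage (HSet n)).prodMap
    (isOpenQuotientMap_projectivization_mk'.restrictPreimage
      (OmegaSet n))).continuous_comp_iff.mp (Continuous.subtype_mk ?_ _)
  have normal_continuous : Continuous fun t : ↥(Projectivization.mk' ℂ ⁻¹' HSet n) ×
      ↥(Projectivization.mk' ℂ ⁻¹' OmegaSet n) => swapNormal (hyperbolicLift n t.1) :=
    continuous_swapNormal.comp (continuous_hyperbolicLift.comp
      (continuous_subtype_val.comp (continuous_subtype_val.comp continuous_fst)))
  have lift_mem (t : ↥(Projectivization.mk' ℂ ⁻¹' HSet n) ×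
      ↥(Projectivization.mk' ℂ ⁻¹' OmegaSet n)) : t.1.1.1 ∈ projectionCone n :=
    mem_projectionCone_of_mk_mem (hSet_subset_omegaSet n t.1.2)
  have reflection_continuous := continuous_orthogonalReflection_lorentzForm normal_continuous
    (continuous_subtype_val.comp (continuous_subtype_val.comp continuous_snd))
    fun t => lorentzForm_swapNormal_hyperbolicLift_ne_zero (lift_mem t)
  exact (continuous_projectivization_mk reflection_continuous fun t =>
    (isRealIsometry_orthogonalReflection_swapNormal (lift_mem t)).map_ne_zero t.2.1.2).congr
      fun t => (originSwap_mk t.1.2 t.2.2).symm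

end OriginSwap

/-- The trivialization of `Π : Ω → H_ℝⁿ` given by the involutions `originSwap x`. -/
noncomputable def hyperbolicTrivialization (n : ℕ) :
    ↥(hyperbolicProj n ⁻¹' HSet n) ≃ₜ ↥(HSet n) × ↥(hyperbolicProj n ⁻¹' {oPoint n}) :=
  homeomorphProdFiber continuous_hyperbolicProj continuous_originSwap originSwap_involutive
    hyperbolicProj_originSwap_eq_iff

theorem omega_fibre_bundle_general (n : ℕ) :
    ∃ P : ↥(OmegaSet n) → Projectivization ℂ (Fin (n + 1) → ℂ),
      (∀ (z : Fin (n + 1) → ℂ) (hz : z ≠ 0) (hf : 0 < fdet n z) (η : ℂ),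
        η ^ 2 = -herm n z (conjVec n z) →
        ∃ hw : conj η • z + η • conjVec n z ≠ 0,
          P ⟨Projectivization.mk ℂ z hz, z, hz, Or.inl ⟨hz, hf⟩, rfl⟩ =
            Projectivization.mk ℂ (conj η • z + η • conjVec n z) hw) ∧
      (∀ (z : Fin (n + 1) → ℂ) (hz : z ≠ 0) (hre : IsRealVec n z)
        (hneg : (herm n z z).re < 0),
        P ⟨Projectivization.mk ℂ z hz, z, hz, Or.inr ⟨hz, hre, hneg⟩, rfl⟩ =
          Projectivization.mk ℂ z hz) ∧
      Set.range P = HSet n ∧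
      (∀ A : Matrix (Fin (n + 1)) (Fin (n + 1)) ℝ,
        Aᵀ * (Matrix.diagonal fun j => if j = Fin.last n then (-1 : ℝ) else 1) * A =
          (Matrix.diagonal fun j => if j = Fin.last n then (-1 : ℝ) else 1) →
        ∀ (z : Fin (n + 1) → ℂ) (hz : z ≠ 0) (hzΩ : z ∈ OmegaCone n)
          (hAz : (A.map Complex.ofReal).mulVec z ≠ 0)
          (hAzΩ : (A.map Complex.ofReal).mulVec z ∈ OmegaCone n)
          (v : Fin (n + 1) → ℂ) (hv : v ≠ 0)
          (hAv : (A.map Complex.ofReal).mulVec v ≠ 0),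
          P ⟨Projectivization.mk ℂ z hz, z, hz, hzΩ, rfl⟩ = Projectivization.mk ℂ v hv →
          P ⟨Projectivization.mk ℂ ((A.map Complex.ofReal).mulVec z) hAz,
              (A.map Complex.ofReal).mulVec z, hAz, hAzΩ, rfl⟩ =
            Projectivization.mk ℂ ((A.map Complex.ofReal).mulVec v) hAv) ∧
      (∃ φ : ↥(P ⁻¹' HSet n) ≃ₜ ↥(HSet n) × ↥(P ⁻¹' {oPoint n}),
        ∀ p : ↥(P ⁻¹' HSet n), ((φ p).1 : ℙ ℂ (Fin (n + 1) → ℂ)) = P p.1) := by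
  refine ⟨hyperbolicProj n, fun z hz hf η hη => ?_, fun z hz hre hneg => ?_,
    range_hyperbolicProj n, fun A hA z hz hzΩ _ _ v hv _ hPv => ?_,
    hyperbolicTrivialization n, fun _ => rfl⟩
  · rw [herm_conjVec] at hη
    have lift_timelike := isRealTimelike_realLift hη (mem_projectionCone_of_fdet_pos hf)
    exact ⟨lift_timelike.ne_zero, hyperbolicProj_mk_eq_realLift _ hη⟩
  · exact (isRealTimelike_iff.mpr ⟨hre, hneg⟩).hyperbolicProj_mk _
  · have isometry := isRealIsometry_mulVecLin hA
    have proj_map := isometry.hyperbolicProj_map ⟨Projectivization.mk ℂ z hz, z, hz, hzΩ, rfl⟩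
    rwa [hPv] at proj_map

open Matrix in
/-- (Theorem 1 / `teo:uno`): there is a map `Π : Ω → ℙ_ℂⁿ` given on the cone by
`z ↦ conj(η)z + η z̄` (with `η² = −⟨z,z̄⟩`) and the identity on `H_ℝⁿ`, whose image is
exactly `H_ℝⁿ`, which is `SO₊(n,1)`-equivariant, and which is a locally trivial fibre
bundle over `H_ℝⁿ` with fibre the Lagrangian `Π⁻¹(o)`. -/
theorem omega_fibre_bundle (n : ℕ) (hn : 2 < n) :
    ∃ P : ↥(OmegaSet n) → Projectivization ℂ (Fin (n + 1) → ℂ),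
      -- (i)
      (∀ (z : Fin (n + 1) → ℂ) (hz : z ≠ 0) (hf : 0 < fdet n z) (η : ℂ),
        η ^ 2 = -herm n z (conjVec n z) →
        ∃ hw : conj η • z + η • conjVec n z ≠ 0,
          P ⟨Projectivization.mk ℂ z hz, z, hz, Or.inl ⟨hz, hf⟩, rfl⟩ =
            Projectivization.mk ℂ (conj η • z + η • conjVec n z) hw) ∧
      -- (ii)
      (∀ (z : Fin (n + 1) → ℂ) (hz : z ≠ 0) (hre : IsRealVec n z)
        (hneg : (herm n z z).re < 0),
        P ⟨Projectivization.mk ℂ z hz, z, hz, Or.inr ⟨hz, hre, hneg⟩, rfl⟩ =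
          Projectivization.mk ℂ z hz) ∧
      -- (iii)
      Set.range P = HSet n ∧
      -- (iv) equivariance
      (∀ A : Matrix (Fin (n + 1)) (Fin (n + 1)) ℝ,
        Aᵀ * (Matrix.diagonal fun j => if j = Fin.last n then (-1 : ℝ) else 1) * A =
          (Matrix.diagonal fun j => if j = Fin.last n then (-1 : ℝ) else 1) →
        ∀ (z : Fin (n + 1) → ℂ) (hz : z ≠ 0) (hzΩ : z ∈ OmegaCone n)
          (hAz : (A.map Complex.ofReal).mulVec z ≠ 0)
          (hAzΩ : (A.map Complex.ofReal).mulVec z ∈ OmegaCone n)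
          (v : Fin (n + 1) → ℂ) (hv : v ≠ 0)
          (hAv : (A.map Complex.ofReal).mulVec v ≠ 0),
          P ⟨Projectivization.mk ℂ z hz, z, hz, hzΩ, rfl⟩ = Projectivization.mk ℂ v hv →
          P ⟨Projectivization.mk ℂ ((A.map Complex.ofReal).mulVec z) hAz,
              (A.map Complex.ofReal).mulVec z, hAz, hAzΩ, rfl⟩ =
            Projectivization.mk ℂ ((A.map Complex.ofReal).mulVec v) hAv) ∧
      -- (v) local triviality
      (∀ x ∈ HSet n,
        ∃ U : Set (Projectivization ℂ (Fin (n + 1) → ℂ)),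
          x ∈ U ∧ U ⊆ HSet n ∧
          IsOpen ((Subtype.val : ↥(HSet n) → Projectivization ℂ (Fin (n + 1) → ℂ)) ⁻¹' U) ∧
          ∃ φ : ↥(P ⁻¹' U) ≃ₜ ↥U × ↥(P ⁻¹' {oPoint n}),
            ∀ p : ↥(P ⁻¹' U),
              ((φ p).1 : Projectivization ℂ (Fin (n + 1) → ℂ)) = P p.1) := by
  obtain ⟨P, lift_eq, real_eq, range_eq, equivariant, φ, hφ⟩ := omega_fibre_bundle_general n
  exact ⟨P, lift_eq, real_eq, range_eq, equivariant,
    fun x hx => ⟨HSet n, hx, subset_rfl, by simp, φ, hφ⟩⟩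
end

section
/- Let 2 ≤ m < n. Let Q̃ : ℂ^{n+1} → ℂ^{m+1} be the ℂ-linear map (z₁,…,z_{n+1}) ↦ (z₁,…,z_m,z_{n+1}), and equip ℂ^{m+1} with the Hermitian form ⟨v,u⟩_m = v₁·conj(u₁) + ⋯ + v_m·conj(u_m) − v_{m+1}·conj(u_{m+1}) of signature (m,1); let T = {v ∈ ℂ^{m+1} \ {0} : v real and ⟨v,v⟩_m = 0}. Then for every z ∈ ℂ^{n+1} \ {0}: there exists w ∈ S_m with ⟨z,w⟩ = 0 if and only if (Q̃z = 0, or there exists v ∈ T with ⟨Q̃z, v⟩_m = 0). Equivalently, the cone over the Kulkarni limit set Λ equals the union of the kernel cone of Q̃ and the Q̃-preimage of the cone over Λ_{(m)}, and the cone over Ω = ℙ_ℂⁿ \ Λ equals the Q̃-preimage of the cone over Ω_{(m)} = ℙ_ℂᵐ \ Λ_{(m)}. -/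
open scoped ComplexConjugate

/-- The projection `Q̃ : ℂ^{n+1} → ℂ^{m+1}`, `(z₁,…,z_{n+1}) ↦ (z₁,…,z_m,z_{n+1})`. -/
def Qt (m n : ℕ) (h : m ≤ n) (z : Fin (n + 1) → ℂ) : Fin (m + 1) → ℂ :=
  fun j => if hj : (j : ℕ) < m then z ⟨(j : ℕ), by omega⟩ else z (Fin.last n)

/-- The cone over the real `(m−1)`-sphere `∂H_ℝᵐ ⊂ ℙ_ℂⁿ`: nonzero real null vectors whose
coordinates `w_{m+1}, …, w_n` (0-based indices `m, …, n−1`) vanish. -/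
def SmCone (m n : ℕ) : Set (Fin (n + 1) → ℂ) :=
  {w | w ≠ 0 ∧ IsRealVec n w ∧
    (∀ j : Fin (n + 1), m ≤ (j : ℕ) → (j : ℕ) < n → w j = 0) ∧ herm n w w = 0}

/-!
Extension by zero `ι : ℂ^{m+1} → ℂ^{n+1}` is the adjoint of `Q̃`, i.e. `⟨z, ιv⟩ = ⟨Q̃z, v⟩_m`, and
it maps `T` onto `S_m`. Hence `z` is orthogonal to a vector of `S_m` exactly when `Q̃z` is
orthogonal to a vector of `T`. As `T` is nonempty, the latter condition holds whenever `Q̃z = 0`.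
-/

section ZeroExtension

variable {m n : ℕ} (h : m ≤ n)

theorem Qt_castSucc (z : Fin (n + 1) → ℂ) (i : Fin m) :
    Qt m n h z i.castSucc = z (Fin.castLE h i).castSucc :=
  dif_pos i.isLt

theorem Qt_last (z : Fin (n + 1) → ℂ) : Qt m n h z (Fin.last m) = z (Fin.last n) :=
  dif_neg (lt_irrefl m)

theorem Qt_zero : Qt m n h 0 = 0 := by
  funext j
  simp only [Qt, Pi.zero_apply, dite_eq_ite, ite_self]

theorem Qt_conjVec (z : Fin (n + 1) → ℂ) :
    Qt m n h (conjVec n z) = conjVec m (Qt m n h z) := by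
  funext j
  simp only [Qt, conjVec]
  split_ifs <;> rfl

/-- Extension by zero `(v₁,…,v_{m+1}) ↦ (v₁,…,v_m,0,…,0,v_{m+1})`, the right inverse of `Q̃` whose
image is cut out by the vanishing of the coordinates `m+1,…,n`, as in `SmCone`. -/
noncomputable def zeroExtend (v : Fin (m + 1) → ℂ) : Fin (n + 1) → ℂ :=
  Fin.snoc (Function.extend (Fin.castLE h) (Fin.init v) 0) (v (Fin.last m))

theorem zeroExtend_castSucc_castLE (v : Fin (m + 1) → ℂ) (i : Fin m) :
    zeroExtend h v (Fin.castLE h i).castSucc = v i.castSucc := by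
  simp only [zeroExtend, Fin.snoc_castSucc, (Fin.castLE_injective h).extend_apply, Fin.init]

theorem zeroExtend_last (v : Fin (m + 1) → ℂ) :
    zeroExtend h v (Fin.last n) = v (Fin.last m) := by
  simp only [zeroExtend, Fin.snoc_last]

theorem zeroExtend_castSucc_of_le (v : Fin (m + 1) → ℂ) {j : Fin n} (hj : m ≤ j) :
    zeroExtend h v j.castSucc = 0 := by
  rw [zeroExtend, Fin.snoc_castSucc, Function.extend_apply', Pi.zero_apply]
  rintro ⟨i, rfl⟩
  exact hj.not_gt i.isLt

theorem Qt_zeroExtend (v : Fin (m + 1) → ℂ) : Qt m n h (zeroExtend h v) = v := by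
  funext j
  cases j using Fin.lastCases with
  | last => rw [Qt_last, zeroExtend_last]
  | cast i => rw [Qt_castSucc, zeroExtend_castSucc_castLE]

theorem zeroExtend_injective : Function.Injective (zeroExtend h) :=
  Function.LeftInverse.injective (Qt_zeroExtend h)

theorem zeroExtend_Qt {w : Fin (n + 1) → ℂ}
    (hw : ∀ j : Fin n, m ≤ (j : ℕ) → w j.castSucc = 0) :
    zeroExtend h (Qt m n h w) = w := by
  funext j
  cases j using Fin.lastCases with
  | last => rw [zeroExtend_last, Qt_last]
  | cast j =>
    obtain hj | hj := lt_or_ge (j : ℕ) m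
    · exact (zeroExtend_castSucc_castLE h _ ⟨j, hj⟩).trans (Qt_castSucc h w ⟨j, hj⟩)
    · rw [zeroExtend_castSucc_of_le h _ hj, hw j hj]

theorem zeroExtend_zero : zeroExtend h 0 = 0 := by
  simpa only [Qt_zero] using zeroExtend_Qt h (w := 0) fun _ _ => rfl

theorem conjVec_zeroExtend (v : Fin (m + 1) → ℂ) :
    conjVec n (zeroExtend h v) = zeroExtend h (conjVec m v) := by
  rw [← zeroExtend_Qt h (w := conjVec n (zeroExtend h v)), Qt_conjVec, Qt_zeroExtend]
  intro j hj
  rw [conjVec, zeroExtend_castSucc_of_le h v hj, map_zero]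

theorem isRealVec_zeroExtend_iff {v : Fin (m + 1) → ℂ} :
    IsRealVec n (zeroExtend h v) ↔ IsRealVec m v := by
  rw [IsRealVec, conjVec_zeroExtend, (zeroExtend_injective h).eq_iff, IsRealVec]

theorem herm_zeroExtend (z : Fin (n + 1) → ℂ) (v : Fin (m + 1) → ℂ) :
    herm n z (zeroExtend h v) = herm m (Qt m n h z) v := by
  rw [herm, herm, zeroExtend_last, Qt_last]
  congr 1
  symm
  refine Fintype.sum_of_injective (Fin.castLE h) (Fin.castLE_injective h) _ _ ?_ fun i => ?_
  · intro j hj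
    have hmj : m ≤ j := by simpa using hj
    rw [zeroExtend_castSucc_of_le h v hmj, map_zero, mul_zero]
  · rw [Qt_castSucc, zeroExtend_castSucc_castLE]

theorem zeroExtend_mem_SmCone_iff {v : Fin (m + 1) → ℂ} :
    zeroExtend h v ∈ SmCone m n ↔ v ∈ Scone m := by
  have mid_eq_zero (j : Fin (n + 1)) (hmj : m ≤ (j : ℕ)) (hjn : (j : ℕ) < n) :
      zeroExtend h v j = 0 :=
    zeroExtend_castSucc_of_le h v (j := ⟨j, hjn⟩) hmj
  have ne_zero_iff : zeroExtend h v ≠ 0 ↔ v ≠ 0 :=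
    (zeroExtend_injective h).ne_iff' (zeroExtend_zero h)
  simp only [SmCone, Scone, Set.mem_ofPred_eq, ne_zero_iff, isRealVec_zeroExtend_iff,
    herm_zeroExtend, Qt_zeroExtend, and_iff_right mid_eq_zero]

theorem SmCone_eq_image_zeroExtend : SmCone m n = zeroExtend h '' Scone m := by
  have subset_range : SmCone m n ⊆ Set.range (zeroExtend h) := fun w ⟨_, _, hw, _⟩ =>
    ⟨Qt m n h w, zeroExtend_Qt h fun j hj => hw j.castSucc hj j.isLt⟩
  have preimage_eq : zeroExtend h ⁻¹' SmCone m n = Scone m :=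
    Set.ext fun _ => zeroExtend_mem_SmCone_iff h
  rw [← preimage_eq, Set.image_preimage_eq_of_subset subset_range]

theorem exists_mem_SmCone_herm_eq_zero_iff (z : Fin (n + 1) → ℂ) :
    (∃ w ∈ SmCone m n, herm n z w = 0) ↔ ∃ v ∈ Scone m, herm m (Qt m n h z) v = 0 := by
  simp only [SmCone_eq_image_zeroExtend h, Set.exists_mem_image, herm_zeroExtend]

end ZeroExtension

theorem herm_zero_left (m : ℕ) (v : Fin (m + 1) → ℂ) : herm m 0 v = 0 := by
  simp [herm]

theorem Scone_nonempty {m : ℕ} (hm : m ≠ 0) : (Scone m).Nonempty := by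
  obtain ⟨k, rfl⟩ := Nat.exists_eq_succ_of_ne_zero hm
  refine ⟨Fin.snoc (Pi.single 0 1) 1, ?_, ?_, ?_⟩
  · intro h
    simpa using congrFun h (Fin.last _)
  · funext j
    cases j using Fin.lastCases <;> simp [conjVec, Pi.single_apply, apply_ite]
  · simp [herm, Pi.single_apply]

theorem lambdaCone_eq_preimage_general (m n : ℕ) (hm : m ≠ 0) (hmn : m ≤ n) :
    (∀ z : Fin (n + 1) → ℂ, z ≠ 0 →
      ((∃ w ∈ SmCone m n, herm n z w = 0) ↔
        (Qt m n hmn z = 0 ∨ ∃ v ∈ Scone m, herm m (Qt m n hmn z) v = 0))) ∧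
    {z : Fin (n + 1) → ℂ | z ≠ 0 ∧ ∃ w ∈ SmCone m n, herm n z w = 0} =
      {z : Fin (n + 1) → ℂ | z ≠ 0 ∧ Qt m n hmn z = 0} ∪
      {z : Fin (n + 1) → ℂ | z ≠ 0 ∧ Qt m n hmn z ∈ LambdaCone m} ∧
    {z : Fin (n + 1) → ℂ | z ≠ 0 ∧ ∀ w ∈ SmCone m n, herm n z w ≠ 0} =
      {z : Fin (n + 1) → ℂ | z ≠ 0 ∧ Qt m n hmn z ≠ 0 ∧
        ∀ v ∈ Scone m, herm m (Qt m n hmn z) v ≠ 0} := by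
  have key (z : Fin (n + 1) → ℂ) : (∃ w ∈ SmCone m n, herm n z w = 0) ↔
      (Qt m n hmn z = 0 ∨ ∃ v ∈ Scone m, herm m (Qt m n hmn z) v = 0) := by
    rw [exists_mem_SmCone_herm_eq_zero_iff hmn, iff_or_self]
    intro hz
    obtain ⟨v, hv⟩ := Scone_nonempty hm
    exact ⟨v, hv, by rw [hz, herm_zero_left]⟩
  refine ⟨fun z _ => key z, ?_, ?_⟩
  · ext z
    simp only [LambdaCone, Set.mem_union, Set.mem_ofPred_eq, key]
    tauto
  · ext z
    have not_key := not_congr (key z)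
    push Not at not_key
    exact and_congr_right fun _ => not_key

/-- (Lemma 5.2 / `le:19`, cone version): the cone over `Λ` is the union of the kernel cone
of `Q̃` and the `Q̃`-preimage of the cone over `Λ_{(m)}`, and the cone over `Ω` is the
`Q̃`-preimage of the cone over `Ω_{(m)}`. -/
theorem lambdaCone_eq_preimage (m n : ℕ) (hm : 2 ≤ m) (hmn : m < n) :
    (∀ z : Fin (n + 1) → ℂ, z ≠ 0 →
      ((∃ w ∈ SmCone m n, herm n z w = 0) ↔
        (Qt m n hmn.le z = 0 ∨ ∃ v ∈ Scone m, herm m (Qt m n hmn.le z) v = 0))) ∧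
    {z : Fin (n + 1) → ℂ | z ≠ 0 ∧ ∃ w ∈ SmCone m n, herm n z w = 0} =
      {z : Fin (n + 1) → ℂ | z ≠ 0 ∧ Qt m n hmn.le z = 0} ∪
      {z : Fin (n + 1) → ℂ | z ≠ 0 ∧ Qt m n hmn.le z ∈ LambdaCone m} ∧
    {z : Fin (n + 1) → ℂ | z ≠ 0 ∧ ∀ w ∈ SmCone m n, herm n z w ≠ 0} =
      {z : Fin (n + 1) → ℂ | z ≠ 0 ∧ Qt m n hmn.le z ≠ 0 ∧
        ∀ v ∈ Scone m, herm m (Qt m n hmn.le z) v ≠ 0} :=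
  lambdaCone_eq_preimage_general m n (by omega) hmn.le
end
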